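/- arXiv:math/0007189 — 10 statements merged into one kernel-verified Lean document; each statement's English description precedes it below -/
import Mathlib

section
/- Let L ⊆ E be a Lagrangian subspace and suppose the symmetric quadrilinear form S satisfies S(x₁,x₂,x₃,x₄) = 0 whenever x₁ ∈ L. Then for all e,e',f,f' ∈ E: the image of S_{e,e'} is contained in L, S_{e,e'} vanishes on L, S_{e,e'} ∘ S_{f,f'} = 0, and S satisfies the invariance condition. -/
/-!
`S_{e,e'} x` pairs to zero with every `y ∈ L`, because `S` vanishes as soon as any one of its
arguments lies in `L`. Hence `S_{e,e'} x` belongs to the orthogonal complement of `L`, which is `L`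
itself, and every assertion reduces to the vanishing of `S` on `L`.

That `L` is its own orthogonal complement follows from its dimension by maximality: adjoining to
`L` a vector orthogonal to it would give an isotropic subspace of dimension more than half of
`dim E`.
-/

section Orthogonal

variable {R M : Type*} [CommSemiring R] [AddCommMonoid M] [Module R M]
  {B : LinearMap.BilinForm R M} {N N' : Submodule R M}

theorem orthogonal_sup : B.orthogonal (N ⊔ N') = B.orthogonal N ⊓ B.orthogonal N' := by
  refine le_antisymm (le_inf (LinearMap.BilinForm.orthogonal_le le_sup_left)
    (LinearMap.BilinForm.orthogonal_le le_sup_right)) ?_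
  rintro x ⟨hxN, hxN'⟩ y hy
  obtain ⟨n, hn, n', hn', rfl⟩ := Submodule.mem_sup.1 hy
  rw [map_add, LinearMap.add_apply, hxN n hn, hxN' n' hn', add_zero]

theorem sup_le_orthogonal_sup (hB : B.IsRefl) (hN : N ≤ B.orthogonal N)
    (hN' : N' ≤ B.orthogonal N') (hNN' : N' ≤ B.orthogonal N) :
    N ⊔ N' ≤ B.orthogonal (N ⊔ N') := by
  have hN'N : N ≤ B.orthogonal N' :=
    (LinearMap.BilinForm.le_orthogonal_orthogonal hB).trans
      (LinearMap.BilinForm.orthogonal_le hNN')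
  rw [orthogonal_sup]
  exact sup_le (le_inf hN hN'N) (le_inf hNN' hN')

theorem span_singleton_le_orthogonal (hB : B.IsAlt) (v : M) :
    Submodule.span R {v} ≤ B.orthogonal (Submodule.span R {v}) := by
  intro x hx y hy
  obtain ⟨a, rfl⟩ := Submodule.mem_span_singleton.1 hx
  obtain ⟨b, rfl⟩ := Submodule.mem_span_singleton.1 hy
  simp [hB.self_eq_zero v]

end Orthogonal

section Lagrangian

variable {K V : Type*} [Field K] [AddCommGroup V] [Module K V] [FiniteDimensional K V]
  {B : LinearMap.BilinForm K V} {L : Submodule K V}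

theorem two_mul_finrank_le_of_le_orthogonal (hB : B.Nondegenerate) (hL : L ≤ B.orthogonal L) :
    2 * Module.finrank K L ≤ Module.finrank K V := by
  have hle := Submodule.finrank_mono hL
  rw [LinearMap.BilinForm.finrank_orthogonal hB] at hle
  have := L.finrank_le
  lia

theorem orthogonal_eq_self_of_le_orthogonal (hB_alt : B.IsAlt) (hB : B.Nondegenerate)
    (hL : L ≤ B.orthogonal L) (hdim : Module.finrank K V / 2 ≤ Module.finrank K L) :
    B.orthogonal L = L := by
  refine le_antisymm (fun v hv => ?_) hL
  have hisotropic : L ⊔ Submodule.span K {v} ≤ B.orthogonal (L ⊔ Submodule.span K {v}) :=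
    sup_le_orthogonal_sup hB_alt.isRefl hL (span_singleton_le_orthogonal hB_alt v)
      ((Submodule.span_singleton_le_iff_mem _ _).2 hv)
  have hhalf := two_mul_finrank_le_of_le_orthogonal hB hisotropic
  have hmax : L = L ⊔ Submodule.span K {v} :=
    Submodule.eq_of_le_of_finrank_le le_sup_left (by lia)
  exact (Submodule.span_singleton_le_iff_mem _ _).1 (left_eq_sup.1 hmax)

end Lagrangian

theorem eq_zero_of_exists_mem_of_symmetric {α β : Type*} [Zero β] {S : α → α → α → α → β}
    (hS : ∀ (v : Fin 4 → α) (σ : Equiv.Perm (Fin 4)),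
      S (v (σ 0)) (v (σ 1)) (v (σ 2)) (v (σ 3)) = S (v 0) (v 1) (v 2) (v 3))
    {s : Set α} (hvan : ∀ x₁ x₂ x₃ x₄, x₁ ∈ s → S x₁ x₂ x₃ x₄ = 0)
    (v : Fin 4 → α) (hv : ∃ i, v i ∈ s) : S (v 0) (v 1) (v 2) (v 3) = 0 := by
  obtain ⟨i, hi⟩ := hv
  rw [← hS v (Equiv.swap 0 i), Equiv.swap_apply_left]
  exact hvan _ _ _ _ hi

theorem stmt_2_general {R M : Type*} [CommSemiring R] [AddCommMonoid M] [Module R M]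
    {B : LinearMap.BilinForm R M} (hB_refl : B.IsRefl) (hB : B.SeparatingLeft)
    {S : M → M → M → M → R}
    (hS : ∀ (v : Fin 4 → M) (σ : Equiv.Perm (Fin 4)),
      S (v (σ 0)) (v (σ 1)) (v (σ 2)) (v (σ 3)) = S (v 0) (v 1) (v 2) (v 3))
    {Sop : M → M → M →ₗ[R] M} (hSop : ∀ e e' x y, B (Sop e e' x) y = S e e' x y)
    {L : Submodule R M} (hL : B.orthogonal L ≤ L)
    (hvan : ∀ x₁ x₂ x₃ x₄, x₁ ∈ L → S x₁ x₂ x₃ x₄ = 0) :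
    (∀ e e' x, Sop e e' x ∈ L) ∧
    (∀ e e', ∀ x ∈ L, Sop e e' x = 0) ∧
    (∀ e e' f f', Sop e e' ∘ₗ Sop f f' = 0) ∧
    (∀ e e' x₁ x₂ x₃ x₄,
      S (Sop e e' x₁) x₂ x₃ x₄ + S x₁ (Sop e e' x₂) x₃ x₄
        + S x₁ x₂ (Sop e e' x₃) x₄ + S x₁ x₂ x₃ (Sop e e' x₄) = 0) := by
  have hzero := eq_zero_of_exists_mem_of_symmetric (s := L) hS hvan
  have hrange (e e' x) : Sop e e' x ∈ L := hL fun y hy =>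
    hB_refl _ _ ((hSop e e' x y).trans (hzero ![e, e', x, y] ⟨3, hy⟩))
  have hker (e e') (x) (hx : x ∈ L) : Sop e e' x = 0 := hB _ fun y =>
    (hSop e e' x y).trans (hzero ![e, e', x, y] ⟨2, hx⟩)
  refine ⟨hrange, hker, fun e e' f f' => LinearMap.ext fun x => hker _ _ _ (hrange f f' x),
    fun e e' x₁ x₂ x₃ x₄ => ?_⟩
  have h₁ : S (Sop e e' x₁) x₂ x₃ x₄ = 0 := hvan _ _ _ _ (hrange e e' x₁)
  have h₂ : S x₁ (Sop e e' x₂) x₃ x₄ = 0 := hzero ![x₁, _, x₃, x₄] ⟨1, hrange e e' x₂⟩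
  have h₃ : S x₁ x₂ (Sop e e' x₃) x₄ = 0 := hzero ![x₁, x₂, _, x₄] ⟨2, hrange e e' x₃⟩
  have h₄ : S x₁ x₂ x₃ (Sop e e' x₄) = 0 := hzero ![x₁, x₂, x₃, _] ⟨3, hrange e e' x₄⟩
  simp only [h₁, h₂, h₃, h₄, add_zero]

/-- If `L ⊆ E` is Lagrangian and the symmetric quadrilinear form `S` vanishes whenever
its first argument lies in `L`, then all operators `S_{e,e'}` have image in `L`, vanish
on `L`, satisfy `S_{e,e'} ∘ S_{f,f'} = 0`, and `S` satisfies the invariance condition. -/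
theorem stmt_2 (E : Type*) [AddCommGroup E] [Module ℂ E] [FiniteDimensional ℂ E]
    (ω : E →ₗ[ℂ] E →ₗ[ℂ] ℂ)
    (hω_alt : ∀ x : E, ω x x = 0)
    (hω_nd : ∀ x : E, (∀ y : E, ω x y = 0) → x = 0)
    (S : E → E → E → E → ℂ)
    (hS_lin : ∀ y z w : E, IsLinearMap ℂ (fun x => S x y z w))
    (hS_symm : ∀ (v : Fin 4 → E) (σ : Equiv.Perm (Fin 4)),
      S (v (σ 0)) (v (σ 1)) (v (σ 2)) (v (σ 3)) = S (v 0) (v 1) (v 2) (v 3))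
    (Sop : E → E → E →ₗ[ℂ] E)
    (hSop : ∀ e e' x y : E, ω (Sop e e' x) y = S e e' x y)
    (L : Submodule ℂ E)
    (hL_isotropic : ∀ x ∈ L, ∀ y ∈ L, ω x y = 0)
    (hL_dim : Module.finrank ℂ L = Module.finrank ℂ E / 2)
    (hvan : ∀ x₁ x₂ x₃ x₄ : E, x₁ ∈ L → S x₁ x₂ x₃ x₄ = 0) :
    (∀ e e' : E, ∀ x : E, Sop e e' x ∈ L) ∧
    (∀ e e' : E, ∀ x ∈ L, Sop e e' x = 0) ∧
    (∀ e e' f f' : E, (Sop e e') ∘ₗ (Sop f f') = 0) ∧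
    (∀ e e' x₁ x₂ x₃ x₄ : E,
      S (Sop e e' x₁) x₂ x₃ x₄ + S x₁ (Sop e e' x₂) x₃ x₄
        + S x₁ x₂ (Sop e e' x₃) x₄ + S x₁ x₂ x₃ (Sop e e' x₄) = 0) := by
  have hω_refl : ω.IsRefl := LinearMap.IsAlt.isRefl hω_alt
  have hL : LinearMap.BilinForm.orthogonal ω L = L :=
    orthogonal_eq_self_of_le_orthogonal hω_alt (hω_refl.nondegenerate_iff_separatingLeft.2 hω_nd)
      (fun y hy x hx => hL_isotropic x hx y hy) hL_dim.ge
  exact stmt_2_general hω_refl hω_nd hS_symm hSop hL.le hvan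
end

section
/- Let H be a 2-dimensional complex vector space with a symplectic form ω_H. Then for every symmetric quadrilinear form S on E and all h,h',h'' ∈ H and e,e',e'' ∈ E, the following identity holds in the tensor product H ⊗ E: ω_H(h',h'')·h⊗(S_{e',e''}e) + ω_H(h'',h)·h'⊗(S_{e'',e}e') + ω_H(h,h')·h''⊗(S_{e,e'}e'') = 0. (This is the Jacobi identity, for triples of elements of H⊗E, of the bracket [h⊗e, h'⊗e'] = ω_H(h,h')·S_{e,e'}.) -/
open TensorProduct

/-!
Nondegeneracy of `ω` transfers the symmetry of `S` to the vectors `S_{x,y}z`, so the three vectors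
of `E` in the cyclic sum coincide and the sum is `(ω_H(h',h'')h + ω_H(h'',h)h' + ω_H(h,h')h'') ⊗ x`.
Its left factor is alternating and trilinear in `h, h', h''`, hence zero when `H` is generated by
two vectors.
-/

section

variable {R E F N M : Type*} [CommRing R]
  [AddCommGroup E] [Module R E] [AddCommGroup F] [Module R F] [AddCommGroup N] [Module R N]
  [AddCommGroup M] [Module R M]

theorem rotate_eq_of_separatingLeft {ω : E →ₗ[R] F →ₗ[R] N} (hω : ω.SeparatingLeft)
    {X : Type*} {S : X → X → X → F → N} (hS : ∀ x y z w, S y z x w = S x y z w)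
    {T : X → X → X → E} (hT : ∀ x y z w, ω (T x y z) w = S x y z w) (x y z : X) :
    T y z x = T x y z := by
  have ω_injective : Function.Injective ω :=
    LinearMap.ker_eq_bot.mp (LinearMap.separatingLeft_iff_ker_eq_bot.mp hω)
  apply ω_injective
  ext w
  rw [hT, hT, hS]

theorem isAlt_apply_smul_add_smul {B : M →ₗ[R] M →ₗ[R] N} (hB : B.IsAlt) (a b : M)
    (p q p' q' : R) :
    B (p • a + q • b) (p' • a + q' • b) = (p * q' - q * p') • B a b := by
  simp only [map_add, map_smul, LinearMap.add_apply, LinearMap.smul_apply, hB.self_eq_zero,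
    ← hB.neg a b]
  module

theorem isAlt_cyclic_sum_eq_zero {B : M →ₗ[R] M →ₗ[R] R} (hB : B.IsAlt) {v : Fin 2 → M}
    (hv : Submodule.span R (Set.range v) = ⊤) (x y z : M) :
    B y z • x + B z x • y + B x y • z = 0 := by
  have exists_coords (u : M) : ∃ p q : R, u = p • v 0 + q • v 1 := by
    have u_mem_span : u ∈ Submodule.span R (Set.range v) := hv ▸ Submodule.mem_top
    obtain ⟨c, hc⟩ := (Submodule.mem_span_range_iff_exists_fun R).mp u_mem_span
    exact ⟨c 0, c 1, by rw [← hc, Fin.sum_univ_two]⟩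
  obtain ⟨p, q, rfl⟩ := exists_coords x
  obtain ⟨p', q', rfl⟩ := exists_coords y
  obtain ⟨p'', q'', rfl⟩ := exists_coords z
  simp only [isAlt_apply_smul_add_smul hB]
  module

theorem stmt_4_general {ω : E →ₗ[R] F →ₗ[R] N} (hω : ω.SeparatingLeft)
    {S : E → E → E → F → N} (hS : ∀ x y z w, S y z x w = S x y z w)
    {Sop : E → E → E → E} (hSop : ∀ e e' x y, ω (Sop e e' x) y = S e e' x y)
    {ωM : M →ₗ[R] M →ₗ[R] R} (hωM : ωM.IsAlt)
    {v : Fin 2 → M} (hv : Submodule.span R (Set.range v) = ⊤)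
    (h h' h'' : M) (e e' e'' : E) :
    ωM h' h'' • (h ⊗ₜ[R] Sop e' e'' e) + ωM h'' h • (h' ⊗ₜ[R] Sop e'' e e')
      + ωM h h' • (h'' ⊗ₜ[R] Sop e e' e'') = 0 := by
  have Sop_rotate := rotate_eq_of_separatingLeft hω hS hSop
  calc
    _ = (ωM h' h'' • h + ωM h'' h • h' + ωM h h' • h'') ⊗ₜ[R] Sop e e' e'' := by
      rw [Sop_rotate e e' e'', ← Sop_rotate e'' e e']
      simp only [smul_tmul', add_tmul]
    _ = 0 := by rw [isAlt_cyclic_sum_eq_zero hωM hv, zero_tmul]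

end

/-- Jacobi identity in `H ⊗ E` for the bracket `[h⊗e, h'⊗e'] = ω_H(h,h')·S_{e,e'}`:
for a symmetric quadrilinear form `S` on `E` and a 2-dimensional symplectic space
`(H, ω_H)`, one has
`ω_H(h',h'')·h⊗(S_{e',e''}e) + ω_H(h'',h)·h'⊗(S_{e'',e}e') + ω_H(h,h')·h''⊗(S_{e,e'}e'') = 0`. -/
theorem stmt_4 (E : Type*) [AddCommGroup E] [Module ℂ E] [FiniteDimensional ℂ E]
    (ω : E →ₗ[ℂ] E →ₗ[ℂ] ℂ)
    (hω_alt : ∀ x : E, ω x x = 0)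
    (hω_nd : ∀ x : E, (∀ y : E, ω x y = 0) → x = 0)
    (S : E → E → E → E → ℂ)
    (hS_lin : ∀ y z w : E, IsLinearMap ℂ (fun x => S x y z w))
    (hS_symm : ∀ (v : Fin 4 → E) (σ : Equiv.Perm (Fin 4)),
      S (v (σ 0)) (v (σ 1)) (v (σ 2)) (v (σ 3)) = S (v 0) (v 1) (v 2) (v 3))
    (Sop : E → E → E →ₗ[ℂ] E)
    (hSop : ∀ e e' x y : E, ω (Sop e e' x) y = S e e' x y)
    (H : Type*) [AddCommGroup H] [Module ℂ H] [FiniteDimensional ℂ H]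
    (ωH : H →ₗ[ℂ] H →ₗ[ℂ] ℂ)
    (hH_dim : Module.finrank ℂ H = 2)
    (hωH_alt : ∀ h : H, ωH h h = 0)
    (hωH_nd : ∀ h : H, (∀ h' : H, ωH h h' = 0) → h = 0) :
    ∀ (h h' h'' : H) (e e' e'' : E),
      ωH h' h'' • (h ⊗ₜ[ℂ] (Sop e' e'' e))
        + ωH h'' h • (h' ⊗ₜ[ℂ] (Sop e'' e e'))
        + ωH h h' • (h'' ⊗ₜ[ℂ] (Sop e e' e'')) = (0 : H ⊗[ℂ] E) := by
  have hS : ∀ x y z w, S y z x w = S x y z w := by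
    intro x y z w
    exact hS_symm ![x, y, z, w] (Equiv.swap 0 1 * Equiv.swap 1 2)
  exact stmt_4_general hω_nd hS hSop hωH_alt (Module.finBasisOfFinrankEq ℂ H hH_dim).span_eq
end

section
/- The symmetric quadrilinear form S satisfies the reality condition (S(jx₁,jx₂,jx₃,jx₄) = conj(S(x₁,x₂,x₃,x₄)) for all x₁,x₂,x₃,x₄ ∈ E) if and only if for all e,e' ∈ E the operator S_{je,e'} − S_{e,je'} commutes with j, i.e. (S_{je,e'} − S_{e,je'})∘j = j∘(S_{je,e'} − S_{e,je'}). -/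
/-!
Since `ω` is nondegenerate and `j` is onto, an endomorphism `A` commutes with `j` if and only if
`ω (A (j x)) (j y) = conj (ω (A x) y)` for all `x, y`. Fixing the last two arguments of `S` thus
leaves a statement about two bilinear maps `B` and `C`, where the identity
`B (j e) (j e') = conj (C e e')` has to be recovered from
`B (j e) e' - B e (j e') = conj (C (j e) e' - C e (j e'))`.
Replacing `e'` by `j e'` gives the sum of `B (j e) (j e') = conj (C e e')` and
`B e e' = conj (C (j e) (j e'))`. Replacing also `e` by `i e` gives their difference, because
`j` is antilinear while `B` and `C` are linear.
-/

theorem surjective_of_apply_apply_eq_neg {X : Type*} [InvolutiveNeg X] {j : X → X}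
    (hj : ∀ x, j (j x) = -x) : Function.Surjective j :=
  fun x => ⟨j (j (j x)), by rw [hj, hj, neg_neg]⟩

theorem isBilinearMap_of_symm {R M N : Type*} [CommSemiring R] [AddCommMonoid M] [Module R M]
    [AddCommMonoid N] [Module R N] {f : M → M → N} (hf : ∀ y, IsLinearMap R fun x => f x y)
    (hsymm : ∀ x y, f x y = f y x) : IsBilinearMap R f where
  add_left x₁ x₂ y := (hf y).map_add x₁ x₂
  smul_left c x y := (hf y).map_smul c x
  add_right x y₁ y₂ := by simp only [hsymm x, (hf x).map_add]
  smul_right c x y := by simp only [hsymm x, (hf x).map_smul]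

theorem swap_first_two_of_perm_invariant {α β : Type*} {f : α → α → α → α → β}
    (hf : ∀ (v : Fin 4 → α) (σ : Equiv.Perm (Fin 4)),
      f (v (σ 0)) (v (σ 1)) (v (σ 2)) (v (σ 3)) = f (v 0) (v 1) (v 2) (v 3))
    (a b c d : α) : f a b c d = f b a c d :=
  hf ![b, a, c, d] (Equiv.swap 0 1)

theorem eq_apply_iff_of_separatingLeft {R M : Type*} [CommRing R] [AddCommGroup M] [Module R M]
    {ω : M →ₗ[R] M →ₗ[R] R} (hω : ω.SeparatingLeft) {σ : R → R} {j : M → M}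
    (hj : Function.Surjective j) (hjω : ∀ x y, ω (j x) (j y) = σ (ω x y)) {u v : M} :
    u = j v ↔ ∀ y, ω u (j y) = σ (ω v y) := by
  refine ⟨?_, fun h => sub_eq_zero.mp (hω _ (hj.forall.mpr fun y => ?_))⟩
  · rintro rfl y
    exact hjω v y
  · rw [map_sub, LinearMap.sub_apply, h, hjω, sub_self]

theorem apply_apply_eq_star_iff_sub_eq_star {M N W : Type*} [AddCommGroup M] [Module ℂ M]
    [AddCommGroup N] [Module ℂ N] [AddCommGroup W] [Module ℂ W] [StarAddMonoid W] [StarModule ℂ W]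
    {B C : M →ₗ[ℂ] N →ₗ[ℂ] W} {J : M →ₗ⋆[ℂ] M} {K : N →ₗ⋆[ℂ] N}
    (hJ : ∀ x, J (J x) = -x) (hK : ∀ y, K (K y) = -y) :
    (∀ x y, B (J x) (K y) = star (C x y)) ↔
      ∀ x y, B (J x) y - B x (K y) = star (C (J x) y - C x (K y)) := by
  constructor
  · intro h x y
    have hCJ : star (C (J x) y) = -B x (K y) := by rw [← h, hJ, map_neg, LinearMap.neg_apply]
    have hCK : star (C x (K y)) = -B (J x) y := by rw [← h, hK, map_neg]
    rw [star_sub, hCJ, hCK, neg_sub_neg]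
  · intro h x y
    have hadd (x : M) : B (J x) (K y) + B x y = star (C (J x) (K y)) + star (C x y) := by
      simpa only [hK, map_neg, sub_neg_eq_add, star_add] using h x (K y)
    have hsub : B (J x) (K y) - B x y = star (C x y) - star (C (J x) (K y)) := by
      have hI := hadd (Complex.I • x)
      simp only [LinearMap.map_smulₛₗ, LinearMap.smul_apply, RingHom.id_apply, star_smul,
        Complex.star_def, map_neg, Complex.conj_I, neg_neg] at hI
      refine (smul_right_inj Complex.I_ne_zero).mp ?_
      linear_combination (norm := module) -hI
    refine (smul_right_inj (two_ne_zero' ℂ)).mp ?_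
    linear_combination (norm := module) hadd x + hsub

theorem stmt_5_general {E : Type*} [AddCommGroup E] [Module ℂ E]
    {ω : E →ₗ[ℂ] E →ₗ[ℂ] ℂ} (hω : ω.SeparatingLeft) {S : E → E → E → E → ℂ}
    (hS : ∀ z w, IsBilinearMap ℂ fun x y => S x y z w) {Sop : E → E → E →ₗ[ℂ] E}
    (hSop : ∀ e e' x y, ω (Sop e e' x) y = S e e' x y) {j : E →ₗ⋆[ℂ] E}
    (hjj : ∀ x, j (j x) = -x) (hjω : ∀ x y, ω (j x) (j y) = starRingEnd ℂ (ω x y)) :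
    (∀ x₁ x₂ x₃ x₄, S (j x₁) (j x₂) (j x₃) (j x₄) = starRingEnd ℂ (S x₁ x₂ x₃ x₄)) ↔
      ∀ e e' x, (Sop (j e) e' - Sop e (j e')) (j x) = j ((Sop (j e) e' - Sop e (j e')) x) := by
  have hcomm (e e' x : E) :
      (Sop (j e) e' - Sop e (j e')) (j x) = j ((Sop (j e) e' - Sop e (j e')) x) ↔
        ∀ y, S (j e) e' (j x) (j y) - S e (j e') (j x) (j y) =
          starRingEnd ℂ (S (j e) e' x y - S e (j e') x y) := by
    rw [eq_apply_iff_of_separatingLeft hω (surjective_of_apply_apply_eq_neg hjj) hjω]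
    simp only [LinearMap.sub_apply, LinearMap.map_sub, hSop]
  have hreal (z w : E) :
      (∀ x y, S (j x) (j y) (j z) (j w) = starRingEnd ℂ (S x y z w)) ↔
        ∀ e e', S (j e) e' (j z) (j w) - S e (j e') (j z) (j w) =
          starRingEnd ℂ (S (j e) e' z w - S e (j e') z w) :=
    apply_apply_eq_star_iff_sub_eq_star
      (B := (hS (j z) (j w)).toLinearMap) (C := (hS z w).toLinearMap) hjj hjj
  simp only [hcomm]
  exact ⟨fun h e e' x y => (hreal x y).mp (fun a b => h a b x y) e e',
    fun h x₁ x₂ x₃ x₄ => (hreal x₃ x₄).mpr (fun e e' => h e e' x₃ x₄) x₁ x₂⟩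

/-- The symmetric quadrilinear form `S` satisfies the reality condition `τS = S`
(i.e. `S(jx₁,jx₂,jx₃,jx₄) = conj (S(x₁,x₂,x₃,x₄))`) if and only if for all `e,e' ∈ E`
the operator `S_{je,e'} − S_{e,je'}` commutes with the quaternionic structure `j`. -/
theorem stmt_5 (E : Type*) [AddCommGroup E] [Module ℂ E] [FiniteDimensional ℂ E]
    (ω : E →ₗ[ℂ] E →ₗ[ℂ] ℂ)
    (hω_alt : ∀ x : E, ω x x = 0)
    (hω_nd : ∀ x : E, (∀ y : E, ω x y = 0) → x = 0)
    (S : E → E → E → E → ℂ)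
    (hS_lin : ∀ y z w : E, IsLinearMap ℂ (fun x => S x y z w))
    (hS_symm : ∀ (v : Fin 4 → E) (σ : Equiv.Perm (Fin 4)),
      S (v (σ 0)) (v (σ 1)) (v (σ 2)) (v (σ 3)) = S (v 0) (v 1) (v 2) (v 3))
    (Sop : E → E → E →ₗ[ℂ] E)
    (hSop : ∀ e e' x y : E, ω (Sop e e' x) y = S e e' x y)
    (j : E → E)
    (hj_add : ∀ x y : E, j (x + y) = j x + j y)
    (hj_smul : ∀ (c : ℂ) (x : E), j (c • x) = (starRingEnd ℂ c) • j x)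
    (hjj : ∀ x : E, j (j x) = -x)
    (hjω : ∀ x y : E, ω (j x) (j y) = starRingEnd ℂ (ω x y)) :
    (∀ x₁ x₂ x₃ x₄ : E,
        S (j x₁) (j x₂) (j x₃) (j x₄) = starRingEnd ℂ (S x₁ x₂ x₃ x₄)) ↔
    (∀ e e' x : E,
        (Sop (j e) e' - Sop e (j e')) (j x) = j ((Sop (j e) e' - Sop e (j e')) x)) :=
  stmt_5_general hω_nd (fun z w => isBilinearMap_of_symm (fun y => hS_lin y z w)
    fun x y => swap_first_two_of_perm_invariant hS_symm x y z w) hSop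
    (j := ⟨⟨j, hj_add⟩, hj_smul⟩) hjj hjω
end

section
/- Let L ⊆ E be a Lagrangian subspace and let L⁰ := {x ∈ L : γ(x,y) = 0 for all y ∈ L} be the kernel of the restriction of γ to L. Then j(L⁰) = L⁰; in particular j(L⁰) ⊆ L. -/
/-!
Let `L` be Lagrangian, so that `L` is its own `ω`-orthogonal. Since `j` preserves orthogonality and
`j² = -1`, the conditions `ω(x, jy) = 0` and `ω(jx, y) = 0` are equivalent; imposing them for all
`y ∈ L` says exactly that `jx ∈ L`. Hence `L⁰ = L ∩ j⁻¹(L)`, which is visibly stable under `j`.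

That an isotropic `L` of half dimension is its own orthogonal follows from maximality: for an
alternating form, adjoining to `L` any vector orthogonal to it gives an isotropic subspace again,
and a nondegenerate form has no isotropic subspace of more than half the dimension.
-/

section Isotropic

open LinearMap (BilinForm)
open Module

variable {R M : Type*} [CommRing R] [AddCommGroup M] [Module R M] {B : BilinForm R M}
variable {K V : Type*} [Field K] [AddCommGroup V] [Module K V] [FiniteDimensional K V]
  {ω : BilinForm K V}

theorem sup_le_orthogonal_sup_s6 (hB : B.IsRefl) {N P : Submodule R M} (hN : N ≤ B.orthogonal N)
    (hP : P ≤ B.orthogonal P) (hNP : P ≤ B.orthogonal N) : N ⊔ P ≤ B.orthogonal (N ⊔ P) := by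
  have sup_le_orthogonal_left : N ⊔ P ≤ B.orthogonal N := sup_le hN hNP
  have hPN : N ≤ B.orthogonal P := fun x hx y hy ↦ hB _ _ (hNP hy x hx)
  have sup_le_orthogonal_right : N ⊔ P ≤ B.orthogonal P := sup_le hPN hP
  intro x hx y hy
  obtain ⟨n, hn, p, hp, rfl⟩ := Submodule.mem_sup.mp hy
  rw [map_add, LinearMap.add_apply, sup_le_orthogonal_left hx n hn,
    sup_le_orthogonal_right hx p hp, add_zero]

theorem span_singleton_le_orthogonal_self {x : M} (hx : B x x = 0) :
    R ∙ x ≤ B.orthogonal (R ∙ x) := by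
  intro y hy z hz
  obtain ⟨a, rfl⟩ := Submodule.mem_span_singleton.mp hy
  obtain ⟨b, rfl⟩ := Submodule.mem_span_singleton.mp hz
  simp [hx]

theorem two_mul_finrank_le_of_le_orthogonal_s6 (hω : ω.Nondegenerate) {W : Submodule K V}
    (hW : W ≤ ω.orthogonal W) : 2 * finrank K W ≤ finrank K V := by
  have finrank_le_codim : finrank K W ≤ finrank K V - finrank K W :=
    BilinForm.finrank_orthogonal hω W ▸ Submodule.finrank_mono hW
  lia

theorem orthogonal_eq_self_of_half_finrank_le (hω : ω.IsAlt) (hnd : ω.Nondegenerate)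
    {W : Submodule K V} (hW : W ≤ ω.orthogonal W) (hdim : finrank K V / 2 ≤ finrank K W) :
    ω.orthogonal W = W := by
  refine le_antisymm (fun x hx ↦ ?_) hW
  have isotropic_sup : W ⊔ K ∙ x ≤ ω.orthogonal (W ⊔ K ∙ x) :=
    sup_le_orthogonal_sup_s6 hω.isRefl hW (span_singleton_le_orthogonal_self (hω.self_eq_zero x))
      ((Submodule.span_singleton_le_iff_mem _ _).mpr hx)
  have finrank_sup_le : finrank K ↥(W ⊔ K ∙ x) ≤ finrank K W := by
    have := two_mul_finrank_le_of_le_orthogonal_s6 hnd isotropic_sup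
    lia
  have sup_eq : W = W ⊔ K ∙ x := Submodule.eq_of_le_of_finrank_le le_sup_left finrank_sup_le
  rw [sup_eq]
  exact Submodule.mem_sup_right (Submodule.mem_span_singleton_self x)

end Isotropic

section SquareNeg

theorem image_inter_preimage_self_of_apply_apply_eq_neg {S α : Type*} [InvolutiveNeg α]
    [SetLike S α] [NegMemClass S α] {j : α → α} (hjj : ∀ x, j (j x) = -x) (s : S) :
    j '' ((s : Set α) ∩ j ⁻¹' s) = (s : Set α) ∩ j ⁻¹' s := by
  have maps : Set.MapsTo j ((s : Set α) ∩ j ⁻¹' s) ((s : Set α) ∩ j ⁻¹' s) := by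
    rintro x ⟨hx, hjx⟩
    refine ⟨hjx, ?_⟩
    rw [Set.mem_preimage, hjj]
    exact neg_mem hx
  refine maps.image_subset.antisymm fun x hx ↦ ⟨j (j (j x)), maps (maps (maps hx)), ?_⟩
  rw [hjj, hjj, neg_neg]

variable {R M : Type*} [CommRing R] [AddCommGroup M] [Module R M]
  {B : LinearMap.BilinForm R M} {j : M → M}

theorem apply_right_eq_zero_iff (hjj : ∀ x, j (j x) = -x)
    (hjB : ∀ x y, B x y = 0 → B (j x) (j y) = 0) (x y : M) : B x (j y) = 0 ↔ B (j x) y = 0 := by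
  constructor <;> intro h <;> simpa [hjj] using hjB _ _ h

theorem setOf_mem_and_apply_right_eq_zero_eq_inter_preimage (hB : B.IsRefl)
    (hjj : ∀ x, j (j x) = -x) (hjB : ∀ x y, B x y = 0 → B (j x) (j y) = 0) {L : Submodule R M}
    (hL : B.orthogonal L = L) : {x | x ∈ L ∧ ∀ y ∈ L, B x (j y) = 0} =
      (L : Set M) ∩ j ⁻¹' L := by
  have apply_mem_iff (x : M) : j x ∈ L ↔ ∀ y ∈ L, B x (j y) = 0 := by
    conv_lhs => rw [← hL, LinearMap.BilinForm.mem_orthogonal_iff]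
    simp only [apply_right_eq_zero_iff hjj hjB, hB.eq_iff (x := j x)]
  ext x
  exact and_congr_right fun _ ↦ (apply_mem_iff x).symm

theorem stmt_6_general (hB : B.IsRefl) (hjj : ∀ x, j (j x) = -x)
    (hjB : ∀ x y, B x y = 0 → B (j x) (j y) = 0) {L : Submodule R M} (hL : B.orthogonal L = L) :
    j '' {x | x ∈ L ∧ ∀ y ∈ L, B x (j y) = 0} = {x | x ∈ L ∧ ∀ y ∈ L, B x (j y) = 0} ∧
      ∀ x, (x ∈ L ∧ ∀ y ∈ L, B x (j y) = 0) → j x ∈ L := by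
  have kernel_eq := setOf_mem_and_apply_right_eq_zero_eq_inter_preimage hB hjj hjB hL
  refine ⟨?_, fun x hx ↦ (kernel_eq.subset hx).2⟩
  rw [kernel_eq, image_inter_preimage_self_of_apply_apply_eq_neg hjj L]

end SquareNeg

/-- If `L ⊆ E` is a Lagrangian subspace and `L⁰` is the kernel of the restriction of
the Hermitian form `γ(x,y) = ω(x,jy)` to `L`, then `j(L⁰) = L⁰`; in particular
`j(L⁰) ⊆ L`. -/
theorem stmt_6 (E : Type*) [AddCommGroup E] [Module ℂ E] [FiniteDimensional ℂ E]
    (ω : E →ₗ[ℂ] E →ₗ[ℂ] ℂ)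
    (hω_alt : ∀ x : E, ω x x = 0)
    (hω_nd : ∀ x : E, (∀ y : E, ω x y = 0) → x = 0)
    (j : E → E)
    (hj_add : ∀ x y : E, j (x + y) = j x + j y)
    (hj_smul : ∀ (c : ℂ) (x : E), j (c • x) = (starRingEnd ℂ c) • j x)
    (hjj : ∀ x : E, j (j x) = -x)
    (hjω : ∀ x y : E, ω (j x) (j y) = starRingEnd ℂ (ω x y))
    (L : Submodule ℂ E)
    (hL_isotropic : ∀ x ∈ L, ∀ y ∈ L, ω x y = 0)
    (hL_dim : Module.finrank ℂ L = Module.finrank ℂ E / 2) :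
    j '' {x : E | x ∈ L ∧ ∀ y ∈ L, ω x (j y) = 0}
        = {x : E | x ∈ L ∧ ∀ y ∈ L, ω x (j y) = 0} ∧
    (∀ x : E, (x ∈ L ∧ ∀ y ∈ L, ω x (j y) = 0) → j x ∈ L) := by
  have alt : ω.IsAlt := hω_alt
  have nondegenerate : ω.Nondegenerate := alt.isRefl.nondegenerate_iff_separatingLeft.mpr hω_nd
  have isotropic : L ≤ LinearMap.BilinForm.orthogonal ω L :=
    fun x hx y hy ↦ hL_isotropic y hy x hx
  have orthogonal_eq := orthogonal_eq_self_of_half_finrank_le alt nondegenerate isotropic hL_dim.ge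
  exact stmt_6_general alt.isRefl hjj (fun x y h ↦ by rw [hjω, h, map_zero]) orthogonal_eq
end

section
/- Let L ⊆ E be a Lagrangian subspace with L = L⁰ ⊕ L⁺ ⊕ L⁻, where L⁰ := {x ∈ L : γ(x,y) = 0 for all y ∈ L}, the three summands are pairwise γ-orthogonal, γ is positive definite on L⁺ (γ(x,x) > 0 for 0 ≠ x ∈ L⁺) and negative definite on L⁻ (γ(x,x) < 0 for 0 ≠ x ∈ L⁻). Then the subspace F := L⁺ + L⁻ + j(L⁺) + j(L⁻) of E is j-invariant, γ(u,v) = 0 for all u ∈ L⁺ + L⁻ and v ∈ j(L⁺) + j(L⁻), and the restrictions of γ and of ω to F are both nondegenerate. -/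
/-!
Put `W = L⁺ + L⁻`, so that `F = W + j(W)`. Since `W` is isotropic for `ω`, every `x, y, z ∈ W`
satisfy `ω(x + j y, j z) = γ(x, z)` and `ω(x + j y, z) = -conj γ(y, z)`. So nondegeneracy of `γ`
on `W` gives that of `ω` on `F`, and then that of `γ` on `F` because `j` maps `F` onto itself.
On `W`, the form `γ` is the orthogonal sum of two definite forms.
-/

section Restriction

variable {R S T M N : Type*} [CommSemiring R] [CommSemiring S] [CommSemiring T]
  [AddCommMonoid M] [Module R M] [AddCommMonoid N] [Module S N] {I : R →+* T} {J : S →+* T}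

theorem separatingLeft_domRestrict₁₂_iff {B : M →ₛₗ[I] N →ₛₗ[J] T}
    {p : Submodule R M} {q : Submodule S N} :
    (B.domRestrict₁₂ p q).SeparatingLeft ↔ ∀ x ∈ p, (∀ y ∈ q, B x y = 0) → x = 0 := by
  simp only [LinearMap.SeparatingLeft, LinearMap.domRestrict₁₂_apply, Subtype.forall,
    Submodule.mk_eq_zero]

theorem separatingLeft_domRestrict₁₂_sup {B : M →ₛₗ[I] N →ₛₗ[J] T}
    {p₁ p₂ : Submodule R M} {q₁ q₂ : Submodule S N}
    (h₁₂ : q₂ ≤ p₁.orthogonalBilin B) (h₂₁ : q₁ ≤ p₂.orthogonalBilin B)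
    (h₁ : (B.domRestrict₁₂ p₁ q₁).SeparatingLeft)
    (h₂ : (B.domRestrict₁₂ p₂ q₂).SeparatingLeft) :
    (B.domRestrict₁₂ (p₁ ⊔ p₂) (q₁ ⊔ q₂)).SeparatingLeft := by
  rw [separatingLeft_domRestrict₁₂_iff] at *
  intro x hx h
  obtain ⟨a, ha, b, hb, rfl⟩ := Submodule.mem_sup.1 hx
  have ha₀ : a = 0 := h₁ a ha fun y hy ↦ by
    simpa [h₂₁ hy b hb] using h y (Submodule.mem_sup_left hy)
  have hb₀ : b = 0 := h₂ b hb fun y hy ↦ by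
    simpa [h₁₂ hy a ha] using h y (Submodule.mem_sup_right hy)
  rw [ha₀, hb₀, add_zero]

end Restriction

section Quaternionic

variable {R E : Type*} [CommRing R] [StarRing R] [AddCommGroup E] [Module R E]

/-- `j` is a quaternionic structure compatible with the bilinear form `ω`. Over `R = ℂ` with
`ω` symplectic this is the classical notion; here the scalars form any commutative star ring. -/
structure IsQuaternionicStructure (ω : E →ₗ[R] E →ₗ[R] R) (j : E →ₛₗ[starRingEnd R] E) :
    Prop where
  apply_apply : ∀ x, j (j x) = -x
  form_apply_apply : ∀ x y, ω (j x) (j y) = starRingEnd R (ω x y)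

/-- The sesquilinear form `γ(x, y) = ω(x, j y)`, Hermitian when `ω` is alternating and `j` is a
quaternionic structure compatible with `ω`. -/
def quaternionicForm (ω : E →ₗ[R] E →ₗ[R] R) (j : E →ₛₗ[starRingEnd R] E) :
    E →ₗ[R] E →ₛₗ[starRingEnd R] R :=
  ω.compl₂ j

/-- The quaternionic span `W + j(W)` of a subspace `W`: when `j ∘ j = -1`, it is the smallest
`j`-invariant subspace containing `W`. -/
def quaternionicSpan (j : E →ₛₗ[starRingEnd R] E) (W : Submodule R E) : Submodule R E :=
  W ⊔ W.map j

variable {ω : E →ₗ[R] E →ₗ[R] R} {j : E →ₛₗ[starRingEnd R] E} {W : Submodule R E}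

theorem quaternionicForm_apply (x y : E) : quaternionicForm ω j x y = ω x (j y) :=
  rfl

theorem mem_quaternionicSpan {v : E} :
    v ∈ quaternionicSpan j W ↔ ∃ x ∈ W, ∃ y ∈ W, v = x + j y := by
  simp [quaternionicSpan, Submodule.mem_sup, eq_comm]

theorem mem_quaternionicSpan_sup {P N : Submodule R E} {v : E} :
    v ∈ quaternionicSpan j (P ⊔ N) ↔
      ∃ a ∈ P, ∃ b ∈ N, ∃ c ∈ P, ∃ d ∈ N, v = a + b + j c + j d := by
  simp only [mem_quaternionicSpan, Submodule.mem_sup]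
  constructor
  · rintro ⟨_, ⟨a, ha, b, hb, rfl⟩, _, ⟨c, hc, d, hd, rfl⟩, rfl⟩
    exact ⟨a, ha, b, hb, c, hc, d, hd, by rw [map_add, add_assoc (a + b)]⟩
  · rintro ⟨a, ha, b, hb, c, hc, d, hd, rfl⟩
    exact ⟨a + b, ⟨a, ha, b, hb, rfl⟩, c + d, ⟨c, hc, d, hd, rfl⟩, by
      rw [map_add, add_assoc (a + b)]⟩

namespace IsQuaternionicStructure

variable (hj : IsQuaternionicStructure ω j)
include hj

theorem form_apply_left (x y : E) :
    ω (j x) y = -starRingEnd R (quaternionicForm ω j x y) := by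
  rw [quaternionicForm_apply, ← hj.form_apply_apply, hj.apply_apply, map_neg, neg_neg]

theorem form_apply_left_eq_zero_iff {x y : E} :
    ω (j x) y = 0 ↔ quaternionicForm ω j x y = 0 := by
  rw [hj.form_apply_left, neg_eq_zero, starRingEnd_apply, star_eq_zero]

theorem isRefl_quaternionicForm (hω : ω.IsRefl) : (quaternionicForm ω j).IsRefl :=
  fun x y hxy ↦ hj.form_apply_left_eq_zero_iff.1 (hω x (j y) hxy)

theorem apply_mem_quaternionicSpan {v : E} (hv : v ∈ quaternionicSpan j W) :
    j v ∈ quaternionicSpan j W := by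
  obtain ⟨x, hx, y, hy, rfl⟩ := mem_quaternionicSpan.1 hv
  refine mem_quaternionicSpan.2 ⟨-y, W.neg_mem hy, x, hx, ?_⟩
  rw [map_add, hj.apply_apply, add_comm]

theorem map_le_orthogonalBilin_quaternionicForm (hW : W ≤ W.orthogonalBilin ω) :
    W.map j ≤ W.orthogonalBilin (quaternionicForm ω j) := by
  rintro _ ⟨y, hy, rfl⟩ x hx
  rw [quaternionicForm_apply, hj.apply_apply, map_neg, hW hy x hx, neg_zero]

theorem separatingLeft_form_quaternionicSpan (hW : W ≤ W.orthogonalBilin ω)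
    (hγ : ((quaternionicForm ω j).domRestrict₁₂ W W).SeparatingLeft) :
    (ω.domRestrict₁₂ (quaternionicSpan j W) (quaternionicSpan j W)).SeparatingLeft := by
  rw [separatingLeft_domRestrict₁₂_iff] at *
  intro u hu h
  obtain ⟨x, hx, y, hy, rfl⟩ := mem_quaternionicSpan.1 hu
  have hx₀ : x = 0 := hγ x hx fun z hz ↦ by
    simpa [quaternionicForm_apply, hj.form_apply_apply, hW hz y hy] using
      h (j z) (Submodule.mem_sup_right (Submodule.mem_map_of_mem hz))
  have hy₀ : y = 0 := hγ y hy fun z hz ↦ by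
    simpa [hj.form_apply_left_eq_zero_iff, hW hz x hx] using h z (Submodule.mem_sup_left hz)
  rw [hx₀, hy₀, map_zero, add_zero]

theorem separatingLeft_quaternionicForm_of_form {F : Submodule R E} (hF : ∀ v ∈ F, j v ∈ F)
    (hω : (ω.domRestrict₁₂ F F).SeparatingLeft) :
    ((quaternionicForm ω j).domRestrict₁₂ F F).SeparatingLeft := by
  rw [separatingLeft_domRestrict₁₂_iff] at *
  refine fun u hu h ↦ hω u hu fun v hv ↦ ?_
  simpa [quaternionicForm_apply, hj.apply_apply] using h (j v) (hF v hv)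

end IsQuaternionicStructure

theorem stmt_7_general (hω : ω.IsRefl) (hj : IsQuaternionicStructure ω j) {P N : Submodule R E}
    (hiso : P ⊔ N ≤ (P ⊔ N).orthogonalBilin ω)
    (hPN : N ≤ P.orthogonalBilin (quaternionicForm ω j))
    (hP : ((quaternionicForm ω j).domRestrict₁₂ P P).SeparatingLeft)
    (hN : ((quaternionicForm ω j).domRestrict₁₂ N N).SeparatingLeft) :
    let F := quaternionicSpan j (P ⊔ N)
    (∀ v ∈ F, j v ∈ F) ∧
    (P ⊔ N).map j ≤ (P ⊔ N).orthogonalBilin (quaternionicForm ω j) ∧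
    ((quaternionicForm ω j).domRestrict₁₂ F F).SeparatingLeft ∧
    (ω.domRestrict₁₂ F F).SeparatingLeft := by
  have hNP : P ≤ N.orthogonalBilin (quaternionicForm ω j) := fun x hx y hy ↦
    hj.isRefl_quaternionicForm hω x y (hPN hy x hx)
  have hγ := separatingLeft_domRestrict₁₂_sup hPN hNP hP hN
  have hF := hj.separatingLeft_form_quaternionicSpan hiso hγ
  exact ⟨fun _ ↦ hj.apply_mem_quaternionicSpan, hj.map_le_orthogonalBilin_quaternionicForm hiso,
    hj.separatingLeft_quaternionicForm_of_form (fun _ ↦ hj.apply_mem_quaternionicSpan) hF, hF⟩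

end Quaternionic

/-- Let `L = L⁰ ⊕ L⁺ ⊕ L⁻` be a Lagrangian subspace decomposed γ-orthogonally, with
`L⁰` the kernel of `γ|L`, `γ` positive definite on `L⁺` and negative definite on `L⁻`.
Then `F := L⁺ + L⁻ + j(L⁺) + j(L⁻)` is `j`-invariant, `L⁺ + L⁻` is γ-orthogonal to
`j(L⁺) + j(L⁻)`, and both `γ` and `ω` restrict nondegenerately to `F`. -/
theorem stmt_7 (E : Type*) [AddCommGroup E] [Module ℂ E] [FiniteDimensional ℂ E]
    (ω : E →ₗ[ℂ] E →ₗ[ℂ] ℂ)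
    (hω_alt : ∀ x : E, ω x x = 0)
    (hω_nd : ∀ x : E, (∀ y : E, ω x y = 0) → x = 0)
    (j : E → E)
    (hj_add : ∀ x y : E, j (x + y) = j x + j y)
    (hj_smul : ∀ (c : ℂ) (x : E), j (c • x) = (starRingEnd ℂ c) • j x)
    (hjj : ∀ x : E, j (j x) = -x)
    (hjω : ∀ x y : E, ω (j x) (j y) = starRingEnd ℂ (ω x y))
    (L L0 Lp Lm : Submodule ℂ E)
    (hL_isotropic : ∀ x ∈ L, ∀ y ∈ L, ω x y = 0)
    (hL_dim : Module.finrank ℂ L = Module.finrank ℂ E / 2)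
    (hL0 : ∀ x : E, x ∈ L0 ↔ (x ∈ L ∧ ∀ y ∈ L, ω x (j y) = 0))
    (hLpL : Lp ≤ L) (hLmL : Lm ≤ L)
    (hdecomp : ∀ x ∈ L, ∃ a ∈ L0, ∃ b ∈ Lp, ∃ c ∈ Lm, x = a + b + c)
    (horth0p : ∀ x ∈ L0, ∀ y ∈ Lp, ω x (j y) = 0)
    (horth0m : ∀ x ∈ L0, ∀ y ∈ Lm, ω x (j y) = 0)
    (horthpm : ∀ x ∈ Lp, ∀ y ∈ Lm, ω x (j y) = 0)
    (hpos : ∀ x ∈ Lp, x ≠ 0 → 0 < (ω x (j x)).re)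
    (hneg : ∀ x ∈ Lm, x ≠ 0 → (ω x (j x)).re < 0) :
    (∀ v ∈ {v : E | ∃ a ∈ Lp, ∃ b ∈ Lm, ∃ c ∈ Lp, ∃ d ∈ Lm, v = a + b + j c + j d},
      j v ∈ {v : E | ∃ a ∈ Lp, ∃ b ∈ Lm, ∃ c ∈ Lp, ∃ d ∈ Lm, v = a + b + j c + j d}) ∧
    (∀ a ∈ Lp, ∀ b ∈ Lm, ∀ c ∈ Lp, ∀ d ∈ Lm, ω (a + b) (j (j c + j d)) = 0) ∧
    (∀ u ∈ {v : E | ∃ a ∈ Lp, ∃ b ∈ Lm, ∃ c ∈ Lp, ∃ d ∈ Lm, v = a + b + j c + j d},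
      (∀ v ∈ {v : E | ∃ a ∈ Lp, ∃ b ∈ Lm, ∃ c ∈ Lp, ∃ d ∈ Lm, v = a + b + j c + j d},
        ω u (j v) = 0) → u = 0) ∧
    (∀ u ∈ {v : E | ∃ a ∈ Lp, ∃ b ∈ Lm, ∃ c ∈ Lp, ∃ d ∈ Lm, v = a + b + j c + j d},
      (∀ v ∈ {v : E | ∃ a ∈ Lp, ∃ b ∈ Lm, ∃ c ∈ Lp, ∃ d ∈ Lm, v = a + b + j c + j d},
        ω u v = 0) → u = 0) := by
  let J : E →ₛₗ[starRingEnd ℂ] E := { toFun := j, map_add' := hj_add, map_smul' := hj_smul }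
  have hiso : Lp ⊔ Lm ≤ (Lp ⊔ Lm).orthogonalBilin ω := fun y hy x hx ↦
    hL_isotropic x (sup_le hLpL hLmL hx) y (sup_le hLpL hLmL hy)
  have hp : ((quaternionicForm ω J).domRestrict₁₂ Lp Lp).SeparatingLeft :=
    separatingLeft_domRestrict₁₂_iff.2 fun x hx h ↦ of_not_not fun hx₀ ↦
      (hpos x hx hx₀).ne' (congrArg Complex.re (h x hx))
  have hm : ((quaternionicForm ω J).domRestrict₁₂ Lm Lm).SeparatingLeft :=
    separatingLeft_domRestrict₁₂_iff.2 fun x hx h ↦ of_not_not fun hx₀ ↦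
      (hneg x hx hx₀).ne (congrArg Complex.re (h x hx))
  obtain ⟨hinv, horth, hγ, hω⟩ := stmt_7_general (LinearMap.IsAlt.isRefl hω_alt) (j := J)
    ⟨hjj, hjω⟩ hiso (fun y hy x hx ↦ horthpm x hx y hy) hp hm
  simp only [separatingLeft_domRestrict₁₂_iff, mem_quaternionicSpan_sup] at hinv hγ hω
  refine ⟨hinv, fun a ha b hb c hc d hd ↦ ?_, hγ, hω⟩
  exact horth (hj_add c d ▸ Submodule.mem_map_of_mem (Submodule.add_mem_sup hc hd)) _
    (Submodule.add_mem_sup ha hb)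
end

section
/- Let 𝔤 = 𝔨 ⊕ 𝔪 be a symmetric decomposition of a finite-dimensional semisimple Lie algebra 𝔤 over a field of characteristic zero, and assume the decomposition is almost effective, i.e. 𝔨 contains no nonzero ideal of 𝔤. Then 𝔨 equals the linear span of {[x,y] : x,y ∈ 𝔪}. -/
/-!
Over a field, a finite-dimensional Lie algebra with nondegenerate Killing form is a direct sum of
simple ideals, so every ideal has a complementary ideal, and the centre is trivial. The ideal `J`
generated by `𝔪` is `[𝔪, 𝔪] + 𝔪`. Let `P` be a complementary ideal and let `a + b ∈ P` with
`a ∈ 𝔨`, `b ∈ 𝔪`. Since `P` commutes with `𝔪`, comparing components in `𝔨` and in `𝔪` shows that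
`b` commutes with `𝔪`, hence with `J`; being in `J`, it also commutes with `P`, so it is central
and vanishes. Thus `P ⊆ 𝔨`, so `P = 0` by almost effectiveness, and `[𝔪, 𝔪] + 𝔪` is the whole
algebra.
-/

namespace SymmetricDecomposition

open LieSubmodule (lieSpan)

variable {R L : Type*} [CommRing R] [LieRing L] [LieAlgebra R L]

/-- The linear span `[M, M]` of the brackets of elements of a submodule `M` of a Lie algebra. It is
only a submodule, whereas Mathlib's `⁅I, N⁆` is formed for an ideal `I` and is a Lie submodule. -/
def bracketSpan (M : Submodule R L) : Submodule R L :=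
  Submodule.span R {z : L | ∃ x ∈ M, ∃ y ∈ M, z = ⁅x, y⁆}

section BracketSpan

variable {M N : Submodule R L} {x y z : L}

lemma lie_mem_bracketSpan (hx : x ∈ M) (hy : y ∈ M) : ⁅x, y⁆ ∈ bracketSpan M :=
  Submodule.subset_span ⟨x, hx, y, hy, rfl⟩

lemma bracketSpan_le : bracketSpan M ≤ N ↔ ∀ x ∈ M, ∀ y ∈ M, ⁅x, y⁆ ∈ N := by
  refine ⟨fun h x hx y hy ↦ h (lie_mem_bracketSpan hx hy), fun h ↦ Submodule.span_le.mpr ?_⟩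
  rintro _ ⟨x, hx, y, hy, rfl⟩
  exact h x hx y hy

lemma lie_mem_bracketSpan_of_forall_lie_mem (hx : ∀ y ∈ M, ⁅x, y⁆ ∈ M) (hz : z ∈ bracketSpan M) :
    ⁅x, z⁆ ∈ bracketSpan M := by
  suffices bracketSpan M ≤ (bracketSpan M).comap (LieAlgebra.ad R L x : L →ₗ[R] L) from this hz
  refine bracketSpan_le.mpr fun u hu v hv ↦ ?_
  rw [Submodule.mem_comap, LieAlgebra.ad_apply, leibniz_lie]
  exact add_mem (lie_mem_bracketSpan (hx u hu) hv) (lie_mem_bracketSpan hu (hx v hv))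

lemma lie_eq_zero_of_mem_bracketSpan (hx : ∀ y ∈ M, ⁅x, y⁆ = 0) (hz : z ∈ bracketSpan M) :
    ⁅x, z⁆ = 0 := by
  suffices bracketSpan M ≤ LinearMap.ker (LieAlgebra.ad R L x : L →ₗ[R] L) from this hz
  refine bracketSpan_le.mpr fun u hu v hv ↦ ?_
  rw [LinearMap.mem_ker, LieAlgebra.ad_apply, leibniz_lie, hx u hu, hx v hv, zero_lie, lie_zero,
    add_zero]

end BracketSpan

section Ideals

variable {I J : LieIdeal R L} {x y : L}

lemma lie_eq_zero_of_disjoint (h : Disjoint I J) (hx : x ∈ I) (hy : y ∈ J) : ⁅x, y⁆ = 0 := by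
  have hxy : ⁅x, y⁆ ∈ I ⊓ J := ⟨lie_mem_left R L I x y hx, lie_mem_right R L J x y hy⟩
  rwa [h.eq_bot, LieSubmodule.mem_bot] at hxy

lemma eq_zero_of_mem_of_forall_lie_eq_zero [LieModule.IsFaithful R L L] (h : IsCompl I J)
    (hx : x ∈ I) (hxI : ∀ y ∈ I, ⁅x, y⁆ = 0) : x = 0 := by
  refine (LieModule.isFaithful_iff' R L L).mp inferInstance x fun y ↦ ?_
  obtain ⟨i, hi, j, hj, rfl⟩ : ∃ i ∈ I, ∃ j ∈ J, i + j = y :=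
    (LieSubmodule.mem_sup _ _ _).mp (h.sup_eq_top ▸ LieSubmodule.mem_top y)
  rw [lie_add, hxI i hi, lie_eq_zero_of_disjoint h.disjoint hx hj, add_zero]

end Ideals

section Decomposition

variable {𝔨 𝔪 : Submodule R L}

lemma toSubmodule_lieSpan_eq_bracketSpan_sup (htop : 𝔨 ⊔ 𝔪 = ⊤)
    (hkm : ∀ x ∈ 𝔨, ∀ y ∈ 𝔪, ⁅x, y⁆ ∈ 𝔪) (hmm : ∀ x ∈ 𝔪, ∀ y ∈ 𝔪, ⁅x, y⁆ ∈ 𝔨) :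
    (lieSpan R L (𝔪 : Set L)).toSubmodule = bracketSpan 𝔪 ⊔ 𝔪 := by
  have lie_mem_sup {x y : L} (hy : y ∈ bracketSpan 𝔪 ⊔ 𝔪) : ⁅x, y⁆ ∈ bracketSpan 𝔪 ⊔ 𝔪 := by
    obtain ⟨a, ha, b, hb, rfl⟩ := Submodule.mem_sup.mp (htop ▸ Submodule.mem_top : x ∈ 𝔨 ⊔ 𝔪)
    obtain ⟨s, hs, c, hc, rfl⟩ := Submodule.mem_sup.mp hy
    have has : ⁅a, s⁆ ∈ bracketSpan 𝔪 := lie_mem_bracketSpan_of_forall_lie_mem (hkm a ha) hs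
    have hbs : ⁅b, s⁆ ∈ 𝔪 := by
      rw [← lie_skew]
      exact neg_mem (hkm s (bracketSpan_le.mpr hmm hs) b hb)
    rw [add_lie, lie_add, lie_add]
    exact add_mem (Submodule.add_mem_sup has (hkm a ha c hc))
      (add_mem (Submodule.mem_sup_right hbs)
        (Submodule.mem_sup_left (lie_mem_bracketSpan hb hc)))
  let J : LieIdeal R L := { bracketSpan 𝔪 ⊔ 𝔪 with lie_mem := lie_mem_sup }
  have m_subset : (𝔪 : Set L) ⊆ lieSpan R L (𝔪 : Set L) := LieSubmodule.subset_lieSpan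
  apply le_antisymm
  · have m_subset_J : (𝔪 : Set L) ⊆ J := fun _ hx ↦ Submodule.mem_sup_right hx
    exact LieSubmodule.lieSpan_le.mpr m_subset_J
  · exact sup_le (bracketSpan_le.mpr fun _ _ _ hy ↦ LieSubmodule.lie_mem _ (m_subset hy)) m_subset

lemma toSubmodule_le_of_isCompl_lieSpan [LieModule.IsFaithful R L L] (hcompl : IsCompl 𝔨 𝔪)
    (hkm : ∀ x ∈ 𝔨, ∀ y ∈ 𝔪, ⁅x, y⁆ ∈ 𝔪) (hmm : ∀ x ∈ 𝔪, ∀ y ∈ 𝔪, ⁅x, y⁆ ∈ 𝔨)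
    {P : LieIdeal R L} (hP : IsCompl (lieSpan R L (𝔪 : Set L)) P) :
    P.toSubmodule ≤ 𝔨 := by
  intro x hx
  obtain ⟨a, ha, b, hb, rfl⟩ :=
    Submodule.mem_sup.mp (hcompl.sup_eq_top ▸ Submodule.mem_top : x ∈ 𝔨 ⊔ 𝔪)
  have hbJ : b ∈ lieSpan R L (𝔪 : Set L) := LieSubmodule.subset_lieSpan hb
  have b_comm_m : ∀ y ∈ 𝔪, ⁅b, y⁆ = 0 := by
    intro y hy
    have hsum : ⁅a, y⁆ + ⁅b, y⁆ = 0 := by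
      rw [← add_lie]
      exact lie_eq_zero_of_disjoint hP.disjoint.symm hx (LieSubmodule.subset_lieSpan hy)
    refine Submodule.disjoint_def.mp hcompl.disjoint _ (hmm b hb y hy) ?_
    rw [eq_neg_of_add_eq_zero_right hsum]
    exact neg_mem (hkm a ha y hy)
  have b_comm_lieSpan : ∀ y ∈ lieSpan R L (𝔪 : Set L), ⁅b, y⁆ = 0 := by
    intro y hy
    rw [← LieSubmodule.mem_toSubmodule,
      toSubmodule_lieSpan_eq_bracketSpan_sup hcompl.sup_eq_top hkm hmm] at hy
    obtain ⟨s, hs, c, hc, rfl⟩ := Submodule.mem_sup.mp hy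
    rw [lie_add, lie_eq_zero_of_mem_bracketSpan b_comm_m hs, b_comm_m c hc, add_zero]
  rwa [eq_zero_of_mem_of_forall_lie_eq_zero hP hbJ b_comm_lieSpan, add_zero]

end Decomposition

lemma isKilling_of_forall_killingForm_eq_zero
    (h : ∀ x : L, (∀ y : L, killingForm R L x y = 0) → x = 0) : LieAlgebra.IsKilling R L where
  killingCompl_top_eq_bot := by
    refine (LieSubmodule.eq_bot_iff _).mpr fun x hx ↦ h x fun y ↦ ?_
    rw [LieModule.traceForm_comm]
    exact (LieIdeal.mem_killingCompl R L ⊤).mp hx y (LieSubmodule.mem_top y)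

end SymmetricDecomposition

open SymmetricDecomposition

theorem stmt_9_general {R L : Type*} [CommRing R] [LieRing L] [LieAlgebra R L]
    [LieAlgebra.IsSemisimple R L] {𝔨 𝔪 : Submodule R L} (hcompl : IsCompl 𝔨 𝔪)
    (hkm : ∀ x ∈ 𝔨, ∀ y ∈ 𝔪, ⁅x, y⁆ ∈ 𝔪) (hmm : ∀ x ∈ 𝔪, ∀ y ∈ 𝔪, ⁅x, y⁆ ∈ 𝔨)
    (heff : ∀ I : LieIdeal R L, (∀ x ∈ I, x ∈ 𝔨) → I = ⊥) :
    𝔨 = Submodule.span R {z : L | ∃ x ∈ 𝔪, ∃ y ∈ 𝔪, z = ⁅x, y⁆} := by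
  change 𝔨 = bracketSpan 𝔪
  obtain ⟨P, hP⟩ := exists_isCompl (LieSubmodule.lieSpan R L (𝔪 : Set L))
  have P_eq_bot : P = ⊥ := heff P (toSubmodule_le_of_isCompl_lieSpan hcompl hkm hmm hP)
  have lieSpan_eq_top : LieSubmodule.lieSpan R L (𝔪 : Set L) = ⊤ :=
    eq_top_of_isCompl_bot (P_eq_bot ▸ hP)
  have sup_eq_top : bracketSpan 𝔪 ⊔ 𝔪 = ⊤ := by
    rw [← toSubmodule_lieSpan_eq_bracketSpan_sup hcompl.sup_eq_top hkm hmm, lieSpan_eq_top,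
      LieSubmodule.top_toSubmodule]
  exact (eq_of_le_of_inf_le_of_le_sup (bracketSpan_le.mpr hmm)
    (hcompl.inf_eq_bot ▸ bot_le) (sup_eq_top ▸ le_top)).symm

/-- For an almost effective symmetric decomposition `𝔤 = 𝔨 ⊕ 𝔪` of a finite-dimensional
semisimple Lie algebra (Killing form nondegenerate) over a field of characteristic zero,
one has `𝔨 = span {[x,y] : x,y ∈ 𝔪}`. -/
theorem stmt_9 (K : Type*) [Field K] [CharZero K]
    (L : Type*) [LieRing L] [LieAlgebra K L] [FiniteDimensional K L]
    (hss : ∀ x : L, (∀ y : L, killingForm K L x y = 0) → x = 0)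
    (𝔨 𝔪 : Submodule K L)
    (hcompl : IsCompl 𝔨 𝔪)
    (hkk : ∀ x ∈ 𝔨, ∀ y ∈ 𝔨, ⁅x, y⁆ ∈ 𝔨)
    (hkm : ∀ x ∈ 𝔨, ∀ y ∈ 𝔪, ⁅x, y⁆ ∈ 𝔪)
    (hmm : ∀ x ∈ 𝔪, ∀ y ∈ 𝔪, ⁅x, y⁆ ∈ 𝔨)
    (heff : ∀ I : LieIdeal K L, (∀ x ∈ I, x ∈ 𝔨) → I = ⊥) :
    𝔨 = Submodule.span K {z : L | ∃ x ∈ 𝔪, ∃ y ∈ 𝔪, z = ⁅x, y⁆} := by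
  have := isKilling_of_forall_killingForm_eq_zero hss
  exact stmt_9_general hcompl hkm hmm heff
end

section
/- Suppose that (i) (C_x·D) = 0 for all x ∈ W (as quadrilinear forms), and (ii) for all x,y ∈ W the trilinear form (z,u,v) ↦ D(C_x y, z, u, v) + (D_{x,y}·C)(z,u,v) vanishes identically. Then D_{x,y} ∘ C_z = 0 and C_z ∘ D_{x,y} = 0 for all x,y,z ∈ W. -/
/-!
Put `T(x, y | a, b, c) = D(C_x y, a, b, c)`. For five fixed vectors this is a weight on the ten
edges `{x, y}` of the complete graph on them. The condition `C_x · D = 0` says that the weights of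
the four edges at any vertex add up to zero. Since `ω(C_x y, D_{a,b} c) = -T(x, y | a, b, c)`, the
other condition says that the weight of an edge and those of the three edges of the complementary
triangle add up to zero. Adding the vertex sums at the two ends of an edge and subtracting those at
the other three vertices shows that twice the weight of the edge is twice that of the triangle.
Together the two relations give `4T = 0`, and nondegeneracy of `ω` turns `T = 0` into the vanishing
of both composites.
-/

section SymmetricForms

variable {V A : Type*}

/-- Symmetry of a form of degree 3, written as a curried function; linearity is not part of it. -/
def IsSymmetric₃ (C : V → V → V → A) : Prop :=
  ∀ (v : Fin 3 → V) (σ : Equiv.Perm (Fin 3)), C (v (σ 0)) (v (σ 1)) (v (σ 2)) = C (v 0) (v 1) (v 2)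

/-- Symmetry of a form of degree 4, written as a curried function; linearity is not part of it. -/
def IsSymmetric₄ (D : V → V → V → V → A) : Prop :=
  ∀ (v : Fin 4 → V) (σ : Equiv.Perm (Fin 4)),
    D (v (σ 0)) (v (σ 1)) (v (σ 2)) (v (σ 3)) = D (v 0) (v 1) (v 2) (v 3)

theorem IsSymmetric₃.swap_left {C : V → V → V → A} (hC : IsSymmetric₃ C) (x y z : V) :
    C x y z = C y x z :=
  hC ![y, x, z] (Equiv.swap 0 1)

theorem IsSymmetric₃.swap_right {C : V → V → V → A} (hC : IsSymmetric₃ C) (x y z : V) :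
    C x y z = C x z y :=
  hC ![x, z, y] (Equiv.swap 1 2)

theorem IsSymmetric₄.second_to_front {D : V → V → V → V → A} (hD : IsSymmetric₄ D)
    (a b c d : V) : D a b c d = D b a c d :=
  hD ![b, a, c, d] (Fin.cycleRange 1)

theorem IsSymmetric₄.third_to_front {D : V → V → V → V → A} (hD : IsSymmetric₄ D)
    (a b c d : V) : D a b c d = D c a b d :=
  hD ![c, a, b, d] (Fin.cycleRange 2)

theorem IsSymmetric₄.fourth_to_front {D : V → V → V → V → A} (hD : IsSymmetric₄ D)
    (a b c d : V) : D a b c d = D d a b c :=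
  hD ![d, a, b, c] (Fin.cycleRange 3)

variable [AddCommGroup A]

/-- The natural action `f · C` of an operator `f` on a trilinear form `C`. -/
def operatorAction₃ (f : V → V) (C : V → V → V → A) (x y z : V) : A :=
  -(C (f x) y z + C x (f y) z + C x y (f z))

/-- The natural action `f · D` of an operator `f` on a quadrilinear form `D`. -/
def operatorAction₄ (f : V → V) (D : V → V → V → V → A) (a b c d : V) : A :=
  -(D (f a) b c d + D a (f b) c d + D a b (f c) d + D a b c (f d))

theorem IsSymmetric₃.operatorAction_eq {C : V → V → V → A} (hC : IsSymmetric₃ C)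
    (f : V → V) (x y z : V) :
    operatorAction₃ f C x y z = -(C y z (f x) + C x z (f y) + C x y (f z)) := by
  rw [operatorAction₃, hC.swap_left (f x), hC.swap_right y (f x), hC.swap_right x (f y)]

theorem IsSymmetric₄.operatorAction_eq {D : V → V → V → V → A} (hD : IsSymmetric₄ D)
    (f : V → V) (a b c d : V) :
    operatorAction₄ f D a b c d =
      -(D (f a) b c d + D (f b) a c d + D (f c) a b d + D (f d) a b c) := by
  rw [operatorAction₄, hD.second_to_front a, hD.third_to_front a, hD.fourth_to_front a b c]

end SymmetricForms

section EdgeWeights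

variable {α A : Type*} [AddCommGroup A] {T : α → α → α → α → α → A}

theorem two_nsmul_edge_eq_two_nsmul_triangle
    (edge_symm : ∀ x y a b c, T x y a b c = T y x a b c)
    (star_eq_zero : ∀ x a b c d, T x a b c d + T x b a c d + T x c a b d + T x d a b c = 0)
    (x y z u v : α) :
    2 • T x y z u v = 2 • (T u v x y z + T z v x y u + T z u x y v) := by
  have star_x := star_eq_zero x y z u v
  have star_y := star_eq_zero y x z u v
  have star_z := star_eq_zero z x y u v
  have star_u := star_eq_zero u x y z v
  have star_v := star_eq_zero v x y z u
  rw [edge_symm y x] at star_y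
  rw [edge_symm z x, edge_symm z y] at star_z
  rw [edge_symm u x, edge_symm u y, edge_symm u z] at star_u
  rw [edge_symm v x, edge_symm v y, edge_symm v z, edge_symm v u] at star_v
  linear_combination (norm := module) star_x + star_y - star_z - star_u - star_v

theorem four_nsmul_edge_eq_zero
    (edge_symm : ∀ x y a b c, T x y a b c = T y x a b c)
    (star_eq_zero : ∀ x a b c d, T x a b c d + T x b a c d + T x c a b d + T x d a b c = 0)
    (edge_add_triangle_eq_zero :
      ∀ x y z u v, T x y z u v + (T u v x y z + T z v x y u + T z u x y v) = 0)
    (x y z u v : α) : 4 • T x y z u v = 0 := by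
  have two_edge_eq := two_nsmul_edge_eq_two_nsmul_triangle edge_symm star_eq_zero x y z u v
  linear_combination (norm := module) two_edge_eq + 2 • edge_add_triangle_eq_zero x y z u v

end EdgeWeights

section SymplecticOperators

variable {R V : Type*} [CommRing R] [AddCommGroup V] [Module R V] {ω : V →ₗ[R] V →ₗ[R] R}
  {C : V → V → V → R} {D : V → V → V → V → R}
  {Cop : V → V →ₗ[R] V} {Dop : V → V → V →ₗ[R] V}

theorem IsSymmetric₃.operator_comm (hC : IsSymmetric₃ C) (hω_sep : ω.SeparatingLeft)
    (hCop : ∀ x y z, ω (Cop x y) z = C x y z) (x y : V) : Cop x y = Cop y x := by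
  refine sub_eq_zero.mp (hω_sep _ fun z => ?_)
  rw [map_sub, LinearMap.sub_apply, hCop, hCop, hC.swap_left, sub_self]

theorem IsSymmetric₄.cubic_operator_eq_neg (hD : IsSymmetric₄ D) (hω_alt : ω.IsAlt)
    (hCop : ∀ x y z, ω (Cop x y) z = C x y z)
    (hDop : ∀ x y z w, ω (Dop x y z) w = D x y z w) (x y a b c : V) :
    C x y (Dop a b c) = -D (Cop x y) a b c := by
  rw [← hCop, ← hω_alt.neg, hDop, hD.fourth_to_front]

theorem quartic_cubic_operator_eq_zero (two_regular : (2 : R) ∈ nonZeroDivisors R)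
    (hω_alt : ω.IsAlt) (hω_sep : ω.SeparatingLeft)
    (hC : IsSymmetric₃ C) (hD : IsSymmetric₄ D)
    (hCop : ∀ x y z, ω (Cop x y) z = C x y z)
    (hDop : ∀ x y z w, ω (Dop x y z) w = D x y z w)
    (hCD : ∀ x a b c d, operatorAction₄ (Cop x) D a b c d = 0)
    (hDC : ∀ x y z u v, D (Cop x y) z u v + operatorAction₃ (Dop x y) C z u v = 0)
    (x y a b c : V) : D (Cop x y) a b c = 0 := by
  have edge_symm (x y a b c : V) : D (Cop x y) a b c = D (Cop y x) a b c := by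
    rw [hC.operator_comm hω_sep hCop]
  have star_eq_zero (x a b c d : V) :
      D (Cop x a) b c d + D (Cop x b) a c d + D (Cop x c) a b d + D (Cop x d) a b c = 0 := by
    rw [← neg_eq_zero, ← hD.operatorAction_eq, hCD]
  have edge_add_triangle_eq_zero (x y z u v : V) :
      D (Cop x y) z u v + (D (Cop u v) x y z + D (Cop z v) x y u + D (Cop z u) x y v) = 0 := by
    have h := hDC x y z u v
    simp only [hC.operatorAction_eq, hD.cubic_operator_eq_neg hω_alt hCop hDop] at h
    linear_combination h
  have four_mul_eq_zero : 2 * (2 * D (Cop x y) a b c) = 0 := by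
    linear_combination
      four_nsmul_edge_eq_zero edge_symm star_eq_zero edge_add_triangle_eq_zero x y a b c
  simpa only [mul_left_mem_nonZeroDivisors_eq_zero_iff two_regular] using four_mul_eq_zero

theorem stmt_10_general (two_regular : (2 : R) ∈ nonZeroDivisors R)
    (hω_alt : ω.IsAlt) (hω_sep : ω.SeparatingLeft)
    (hC : IsSymmetric₃ C) (hD : IsSymmetric₄ D)
    (hCop : ∀ x y z, ω (Cop x y) z = C x y z)
    (hDop : ∀ x y z w, ω (Dop x y z) w = D x y z w)
    (hCD : ∀ x a b c d, operatorAction₄ (Cop x) D a b c d = 0)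
    (hDC : ∀ x y z u v, D (Cop x y) z u v + operatorAction₃ (Dop x y) C z u v = 0)
    (x y z : V) : Dop x y ∘ₗ Cop z = 0 ∧ Cop z ∘ₗ Dop x y = 0 := by
  have D_Cop_eq_zero :=
    quartic_cubic_operator_eq_zero two_regular hω_alt hω_sep hC hD hCop hDop hCD hDC
  constructor <;> refine LinearMap.ext fun w => hω_sep _ fun v => ?_
  · rw [LinearMap.comp_apply, hDop, hD.third_to_front, D_Cop_eq_zero]
  · rw [LinearMap.comp_apply, hCop, hC.swap_right, hD.cubic_operator_eq_neg hω_alt hCop hDop,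
      D_Cop_eq_zero, neg_zero]

end SymplecticOperators

/-- If `C_x · D = 0` for all `x ∈ W` and `D(C_x y, ·,·,·) + (D_{x,y}·C)(·,·,·) = 0`
for all `x,y ∈ W`, then `D_{x,y} ∘ C_z = 0` and `C_z ∘ D_{x,y} = 0` for all
`x,y,z ∈ W`. -/
theorem stmt_10 (W : Type*) [AddCommGroup W] [Module ℂ W] [FiniteDimensional ℂ W]
    (ω : W →ₗ[ℂ] W →ₗ[ℂ] ℂ)
    (hω_alt : ∀ x : W, ω x x = 0)
    (hω_nd : ∀ x : W, (∀ y : W, ω x y = 0) → x = 0)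
    (C : W → W → W → ℂ)
    (hC_lin : ∀ y z : W, IsLinearMap ℂ (fun x => C x y z))
    (hC_symm : ∀ (v : Fin 3 → W) (σ : Equiv.Perm (Fin 3)),
      C (v (σ 0)) (v (σ 1)) (v (σ 2)) = C (v 0) (v 1) (v 2))
    (D : W → W → W → W → ℂ)
    (hD_lin : ∀ y z w : W, IsLinearMap ℂ (fun x => D x y z w))
    (hD_symm : ∀ (v : Fin 4 → W) (σ : Equiv.Perm (Fin 4)),
      D (v (σ 0)) (v (σ 1)) (v (σ 2)) (v (σ 3)) = D (v 0) (v 1) (v 2) (v 3))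
    (Cop : W → W →ₗ[ℂ] W)
    (hCop : ∀ x y z : W, ω (Cop x y) z = C x y z)
    (Dop : W → W → W →ₗ[ℂ] W)
    (hDop : ∀ x y z w : W, ω (Dop x y z) w = D x y z w)
    (h1 : ∀ x a b c d : W,
      -(D (Cop x a) b c d + D a (Cop x b) c d
        + D a b (Cop x c) d + D a b c (Cop x d)) = 0)
    (h2 : ∀ x y z u v : W,
      D (Cop x y) z u v
        + (-(C (Dop x y z) u v + C z (Dop x y u) v + C z u (Dop x y v))) = 0) :
    ∀ x y z : W, (Dop x y) ∘ₗ (Cop z) = 0 ∧ (Cop z) ∘ₗ (Dop x y) = 0 :=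
  stmt_10_general (mem_nonZeroDivisors_of_ne_zero two_ne_zero) hω_alt hω_nd hC_symm hD_symm
    hCop hDop h1 h2
end

section
/- Suppose that (i) C_{B̂w} = 0, C_w ∘ B̂ = 0 and B̂ ∘ C_w = 0 for all w ∈ W; (ii) (B̂·D) = 0 (as quadrilinear forms); (iii) for all w ∈ W the trilinear form (x,y,z) ↦ −8·D(B̂w, x, y, z) + 3·(C_w·C)(x,y,z) vanishes identically; and (iv) for all w,w' ∈ W the bilinear form (x,y) ↦ (3/2)·C(C_w w', x, y) + 2·(D_{w,w'}·B)(x,y) vanishes identically. Then: C_z ∘ C_x = 0 for all x,z ∈ W (equivalently C(C_x y, u, v) = 0 for all x,y,u,v), hence [C_x,C_y] = 0 and C_x·C = 0 for all x,y ∈ W, and moreover D(B̂w, x, y, z) = 0 for all w,x,y,z ∈ W. -/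
/-!
Put `E(w; x, y, z) = D(B̂w, x, y, z)`, which is symmetric in `x, y, z`. Hypothesis (ii) says that
the total symmetrization of `E` vanishes, and since `ω` is alternating, (iv) reads
`3 C(C_w w', x, y) = -4 (E(x; y, w, w') + E(y; x, w, w'))`. Substituting this into (iii) yields
`8 E(w; x, y, z) = 8 (E(x; w, y, z) + E(y; w, x, z) + E(z; w, x, y))`, whose right-hand side is
`-8 E(w; x, y, z)` by (ii). Hence `E = 0`, and then (iv) gives `C(C_w w', x, y) = 0`.
-/

section SymmetricFunctions

variable {α β : Type*}

/-- A function of three arguments that is invariant under permuting them. It is curried, so the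
permutation acts on the indices of a triple `v` holding the arguments. -/
def IsSymm₃ (C : α → α → α → β) : Prop :=
  ∀ (v : Fin 3 → α) (σ : Equiv.Perm (Fin 3)),
    C (v (σ 0)) (v (σ 1)) (v (σ 2)) = C (v 0) (v 1) (v 2)

/-- A function of four arguments that is invariant under permuting them, with the same encoding
as `IsSymm₃`. -/
def IsSymm₄ (D : α → α → α → α → β) : Prop :=
  ∀ (v : Fin 4 → α) (σ : Equiv.Perm (Fin 4)),
    D (v (σ 0)) (v (σ 1)) (v (σ 2)) (v (σ 3)) = D (v 0) (v 1) (v 2) (v 3)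

theorem IsSymm₃.swap {C : α → α → α → β} (hC : IsSymm₃ C) (x y z : α) : C x y z = C y x z := by
  simpa [Equiv.swap_apply_def] using hC ![y, x, z] (Equiv.swap 0 1)

theorem IsSymm₃.rotate {C : α → α → α → β} (hC : IsSymm₃ C) (x y z : α) :
    C x y z = C y z x :=
  (hC ![x, y, z] (finRotate 3)).symm

theorem IsSymm₄.swap {D : α → α → α → α → β} (hD : IsSymm₄ D) (x y z w : α) :
    D x y z w = D y x z w := by
  simpa [Equiv.swap_apply_def] using hD ![y, x, z, w] (Equiv.swap 0 1)

theorem IsSymm₄.rotate {D : α → α → α → α → β} (hD : IsSymm₄ D) (x y z w : α) :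
    D x y z w = D y z w x :=
  (hD ![x, y, z, w] (finRotate 4)).symm

theorem IsSymm₄.isSymm₃_apply {D : α → α → α → α → β} (hD : IsSymm₄ D) (a : α) :
    IsSymm₃ (D a) := fun v σ => by
  have h := hD (Fin.cons a v) (Equiv.Perm.decomposeFin.symm (0, σ))
  rw [show (1 : Fin 4) = Fin.succ 0 from rfl, show (2 : Fin 4) = Fin.succ 1 from rfl,
    show (3 : Fin 4) = Fin.succ 2 from rfl] at h
  simpa only [Equiv.Perm.decomposeFin_symm_apply_zero, Equiv.Perm.decomposeFin_symm_apply_succ,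
    Equiv.swap_self, Equiv.refl_apply, Fin.cons_zero, Fin.cons_succ] using h

theorem IsSymm₃.sum_apply_map [Add β] {C : α → α → α → β} (hC : IsSymm₃ C) (f : α → α)
    (x y z : α) :
    C (f x) y z + C x (f y) z + C x y (f z) = C (f x) y z + C (f y) x z + C (f z) x y := by
  rw [hC.swap x (f y) z, hC.rotate (f z) x y]

theorem IsSymm₄.sum_apply_map [Add β] {D : α → α → α → α → β} (hD : IsSymm₄ D) (f : α → α)
    (x y z w : α) :
    D (f x) y z w + D x (f y) z w + D x y (f z) w + D x y z (f w) =
      D (f x) y z w + D (f y) x z w + D (f z) x y w + D (f w) x y z := by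
  rw [hD.swap x (f y) z w, (hD.isSymm₃_apply x).swap y (f z) w, hD.swap x (f z) y w,
    hD.rotate (f w) x y z]

theorem sum_pairs_eq_neg_two_mul {R : Type*} [CommRing R] {E : α → α → α → α → R}
    (hE : ∀ w, IsSymm₃ (E w))
    (hsum : ∀ x y z w, E x y z w + E y x z w + E z x y w + E w x y z = 0) (w x y z : α) :
    (E y z w x + E z y w x) + (E x z w y + E z x w y) + (E x y w z + E y x w z) =
      -2 * E w x y z := by
  rw [(hE y).rotate z w x, (hE z).rotate y w x, (hE x).rotate z w y, (hE z).swap x w y,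
    (hE x).swap y w z, (hE y).swap x w z]
  linear_combination 2 * hsum w x y z

end SymmetricFunctions

section AlternatingForm

variable {R M : Type*} [CommRing R] [AddCommGroup M] [Module R M] {ω : M →ₗ[R] M →ₗ[R] R}

theorem apply_quarticOp_right (hω : ω.IsAlt) {B : M → M → R} {D : M → M → M → M → R}
    (hD : IsSymm₄ D) {Bop : M →ₗ[R] M} (hBop : ∀ x y, ω (Bop x) y = B x y)
    {Dop : M → M → M →ₗ[R] M} (hDop : ∀ x y z w, ω (Dop x y z) w = D x y z w) (w w' x y : M) :
    B x (Dop w w' y) = -D (Bop x) y w w' := by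
  calc B x (Dop w w' y) = -ω (Dop w w' y) (Bop x) := by rw [← hBop, hω.neg]
    _ = -D w w' y (Bop x) := by rw [hDop]
    _ = -D (Bop x) y w w' := by rw [← hD.rotate, (hD.isSymm₃_apply _).rotate y w w']

theorem quarticOp_action_quadratic (hω : ω.IsAlt) {B : M → M → R}
    (hB : ∀ x y, B x y = B y x) {D : M → M → M → M → R} (hD : IsSymm₄ D)
    {Bop : M →ₗ[R] M} (hBop : ∀ x y, ω (Bop x) y = B x y)
    {Dop : M → M → M →ₗ[R] M} (hDop : ∀ x y z w, ω (Dop x y z) w = D x y z w) (w w' x y : M) :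
    -(B (Dop w w' x) y + B x (Dop w w' y)) = D (Bop x) y w w' + D (Bop y) x w w' := by
  rw [hB (Dop w w' x) y, apply_quarticOp_right hω hD hBop hDop,
    apply_quarticOp_right hω hD hBop hDop]
  ring

theorem cubicOp_comp_eq_zero (hω : ω.SeparatingLeft) {C : M → M → M → R} (hC : IsSymm₃ C)
    {Cop : M → M →ₗ[R] M} (hCop : ∀ x y z, ω (Cop x y) z = C x y z)
    (hCC : ∀ x y u v, C (Cop x y) u v = 0) (x z : M) : Cop z ∘ₗ Cop x = 0 := by
  refine LinearMap.ext fun y => hω _ fun v => ?_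
  rw [LinearMap.comp_apply, hCop, hC.swap, hCC]

end AlternatingForm

theorem stmt_11_general {K W : Type*} [Field K] [NeZero (2 : K)] [NeZero (3 : K)]
    [AddCommGroup W] [Module K W] {ω : W →ₗ[K] W →ₗ[K] K}
    (hω_alt : ω.IsAlt) (hω_nd : ω.SeparatingLeft)
    {B : W → W → K} (hB : ∀ x y, B x y = B y x)
    {C : W → W → W → K} (hC : IsSymm₃ C)
    {D : W → W → W → W → K} (hD : IsSymm₄ D)
    {Bop : W →ₗ[K] W} (hBop : ∀ x y, ω (Bop x) y = B x y)
    {Cop : W → W →ₗ[K] W} (hCop : ∀ x y z, ω (Cop x y) z = C x y z)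
    {Dop : W → W → W →ₗ[K] W} (hDop : ∀ x y z w, ω (Dop x y z) w = D x y z w)
    (hii : ∀ a b c d,
      -(D (Bop a) b c d + D a (Bop b) c d + D a b (Bop c) d + D a b c (Bop d)) = 0)
    (hiii : ∀ w x y z,
      -8 * D (Bop w) x y z
        + 3 * (-(C (Cop w x) y z + C x (Cop w y) z + C x y (Cop w z))) = 0)
    (hiv : ∀ w w' x y,
      (3 / 2 : K) * C (Cop w w') x y
        + 2 * (-(B (Dop w w' x) y + B x (Dop w w' y))) = 0) :
    (∀ x z, Cop z ∘ₗ Cop x = 0) ∧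
    (∀ x y u v, C (Cop x y) u v = 0) ∧
    (∀ x y, Cop x ∘ₗ Cop y - Cop y ∘ₗ Cop x = 0) ∧
    (∀ x a b c, C (Cop x a) b c + C a (Cop x b) c + C a b (Cop x c) = 0) ∧
    (∀ w x y z, D (Bop w) x y z = 0) := by
  have two_ne : (2 : K) ≠ 0 := NeZero.ne 2
  have three_ne : (3 : K) ≠ 0 := NeZero.ne 3
  have hCD : ∀ w w' x y,
      3 * C (Cop w w') x y = -4 * (D (Bop x) y w w' + D (Bop y) x w w') := fun w w' x y => by
    have h := hiv w w' x y
    rw [quarticOp_action_quadratic hω_alt hB hD hBop hDop] at h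
    field_simp at h
    linear_combination h
  have hsum : ∀ x y z w,
      D (Bop x) y z w + D (Bop y) x z w + D (Bop z) x y w + D (Bop w) x y z = 0 :=
    fun x y z w => by rw [← hD.sum_apply_map Bop, ← neg_eq_zero, hii]
  have hDB : ∀ w x y z, D (Bop w) x y z = 0 := fun w x y z => by
    have h := hiii w x y z
    rw [hC.sum_apply_map (Cop w)] at h
    have hpairs := sum_pairs_eq_neg_two_mul (fun w => hD.isSymm₃_apply (Bop w)) hsum w x y z
    have h16 : (2 : K) ^ 4 * D (Bop w) x y z = 0 := by
      linear_combination -h - hCD w x y z - hCD w y x z - hCD w z x y + 4 * hpairs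
    exact (mul_eq_zero.mp h16).resolve_left (pow_ne_zero 4 two_ne)
  have hCC : ∀ x y u v, C (Cop x y) u v = 0 := fun x y u v => by
    simpa [hDB, three_ne] using hCD x y u v
  have hcomp := cubicOp_comp_eq_zero hω_nd hC hCop hCC
  exact ⟨hcomp, hCC, fun x y => by rw [hcomp, hcomp, sub_zero],
    fun x a b c => by rw [hC.sum_apply_map (Cop x), hCC, hCC, hCC, add_zero, add_zero], hDB⟩

/-- Under hypotheses (i)–(iv) (equations (3.9), (3.7), (3.10), (3.12) of the paper) on
the symmetric forms `B, C, D` on a complex symplectic vector space `W`, one has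
`C_z ∘ C_x = 0` (equivalently `C(C_x y, u, v) = 0`), hence `[C_x, C_y] = 0` and
`C_x · C = 0`, and moreover `D(B̂w, x, y, z) = 0`. -/
theorem stmt_11 (W : Type*) [AddCommGroup W] [Module ℂ W] [FiniteDimensional ℂ W]
    (ω : W →ₗ[ℂ] W →ₗ[ℂ] ℂ)
    (hω_alt : ∀ x : W, ω x x = 0)
    (hω_nd : ∀ x : W, (∀ y : W, ω x y = 0) → x = 0)
    (B : W → W → ℂ)
    (hB_lin : ∀ y : W, IsLinearMap ℂ (fun x => B x y))
    (hB_symm : ∀ x y : W, B x y = B y x)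
    (C : W → W → W → ℂ)
    (hC_lin : ∀ y z : W, IsLinearMap ℂ (fun x => C x y z))
    (hC_symm : ∀ (v : Fin 3 → W) (σ : Equiv.Perm (Fin 3)),
      C (v (σ 0)) (v (σ 1)) (v (σ 2)) = C (v 0) (v 1) (v 2))
    (D : W → W → W → W → ℂ)
    (hD_lin : ∀ y z w : W, IsLinearMap ℂ (fun x => D x y z w))
    (hD_symm : ∀ (v : Fin 4 → W) (σ : Equiv.Perm (Fin 4)),
      D (v (σ 0)) (v (σ 1)) (v (σ 2)) (v (σ 3)) = D (v 0) (v 1) (v 2) (v 3))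
    (Bop : W →ₗ[ℂ] W)
    (hBop : ∀ x y : W, ω (Bop x) y = B x y)
    (Cop : W → W →ₗ[ℂ] W)
    (hCop : ∀ x y z : W, ω (Cop x y) z = C x y z)
    (Dop : W → W → W →ₗ[ℂ] W)
    (hDop : ∀ x y z w : W, ω (Dop x y z) w = D x y z w)
    (hi1 : ∀ w : W, Cop (Bop w) = 0)
    (hi2 : ∀ w : W, (Cop w) ∘ₗ Bop = 0)
    (hi3 : ∀ w : W, Bop ∘ₗ (Cop w) = 0)
    (hii : ∀ a b c d : W,
      -(D (Bop a) b c d + D a (Bop b) c d + D a b (Bop c) d + D a b c (Bop d)) = 0)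
    (hiii : ∀ w x y z : W,
      -8 * D (Bop w) x y z
        + 3 * (-(C (Cop w x) y z + C x (Cop w y) z + C x y (Cop w z))) = 0)
    (hiv : ∀ w w' x y : W,
      (3 / 2 : ℂ) * C (Cop w w') x y
        + 2 * (-(B (Dop w w' x) y + B x (Dop w w' y))) = 0) :
    (∀ x z : W, (Cop z) ∘ₗ (Cop x) = 0) ∧
    (∀ x y u v : W, C (Cop x y) u v = 0) ∧
    (∀ x y : W, (Cop x) ∘ₗ (Cop y) - (Cop y) ∘ₗ (Cop x) = 0) ∧
    (∀ x a b c : W, C (Cop x a) b c + C a (Cop x b) c + C a b (Cop x c) = 0) ∧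
    (∀ w x y z : W, D (Bop w) x y z = 0) :=
  stmt_11_general hω_alt hω_nd hB_symm hC_symm hD_symm hBop hCop hDop hii hiii hiv
end

section
/- Suppose all pairwise compositions of the associated operators vanish: B̂∘B̂ = 0, B̂∘C_x = C_x∘B̂ = 0, B̂∘D_{x,y} = D_{x,y}∘B̂ = 0, C_x∘C_y = 0, C_x∘D_{y,z} = 0 and D_{x,y}∘C_z = 0 for all x,y,z ∈ W. Then: (1) every v ∈ Σ_B + Σ_C satisfies B̂v = 0, C(v,·,·) = 0 and D(v,·,·,·) = 0; (2) every v ∈ Σ_D satisfies B̂v = 0 and C(v,·,·) = 0; (3) Σ_B + Σ_C is ω-isotropic, i.e. ω(u,v) = 0 for all u,v ∈ Σ_B + Σ_C; and (4) ω(u,v) = 0 for all u ∈ Σ_D and v ∈ Σ_B + Σ_C. -/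
/-!
The symmetry of a form `ω(T x, y)` in `x` and `y` makes the range of `T` orthogonal to the kernel
of `T`, and, summing over a family, the support of a family orthogonal to its common kernel. The
vanishing of all compositions `T i ∘ S j` says exactly that the support of `S` lies in the common
kernel of `T`. Both facts are applied to the family consisting of `B̂` and all `C_x`, whose support
is `Σ_B + Σ_C`, and to the family of all `D_{x,y}`.
-/

section OperatorFamilies

variable {R W N ι κ : Type*} [CommSemiring R] [AddCommMonoid W] [Module R W]
  [AddCommMonoid N] [Module R N]

/-- The support of a family of operators: the subspace spanned by all of their values. It is the
`Σ` attached to a form whose associated operators are the members of the family. -/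
def operatorSupport (T : ι → Module.End R W) : Submodule R W :=
  Submodule.span R {v | ∃ i x, v = T i x}

/-- The common kernel of a family of operators. For the operators associated with a symmetric
form through a nondegenerate `ω`, it is the kernel of the form. -/
def commonKernel (T : ι → Module.End R W) : Submodule R W :=
  ⨅ i, LinearMap.ker (T i)

lemma mem_commonKernel {T : ι → Module.End R W} {v : W} :
    v ∈ commonKernel T ↔ ∀ i, T i v = 0 := by
  simp only [commonKernel, Submodule.mem_iInf, LinearMap.mem_ker]

lemma operatorSupport_le_iff {T : ι → Module.End R W} {p : Submodule R W} :
    operatorSupport T ≤ p ↔ ∀ i x, T i x ∈ p := by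
  refine Submodule.span_le.trans ⟨fun h i x ↦ h ⟨i, x, rfl⟩, ?_⟩
  rintro h _ ⟨i, x, rfl⟩
  exact h i x

lemma apply_mem_operatorSupport (T : ι → Module.End R W) (i : ι) (x : W) :
    T i x ∈ operatorSupport T :=
  operatorSupport_le_iff.mp le_rfl i x

lemma operatorSupport_option_elim' (A : Module.End R W) (T : ι → Module.End R W) :
    operatorSupport (Option.elim' A T) = LinearMap.range A ⊔ operatorSupport T := by
  apply le_antisymm
  · refine operatorSupport_le_iff.mpr (Option.forall.mpr ⟨fun x ↦ ?_, fun i x ↦ ?_⟩)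
    · exact Submodule.mem_sup_left (LinearMap.mem_range_self A x)
    · exact Submodule.mem_sup_right (apply_mem_operatorSupport T i x)
  · refine sup_le ?_ (operatorSupport_le_iff.mpr fun i ↦ ?_)
    · rintro _ ⟨x, rfl⟩
      exact apply_mem_operatorSupport (Option.elim' A T) none x
    · exact apply_mem_operatorSupport (Option.elim' A T) (some i)

lemma commonKernel_option_elim' (A : Module.End R W) (T : ι → Module.End R W) :
    commonKernel (Option.elim' A T) = LinearMap.ker A ⊓ commonKernel T :=
  iInf_option _

lemma operatorSupport_le_commonKernel {S : κ → Module.End R W} {T : ι → Module.End R W}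
    (h : ∀ i j, T i ∘ₗ S j = 0) : operatorSupport S ≤ commonKernel T :=
  operatorSupport_le_iff.mpr fun j x ↦ mem_commonKernel.mpr fun i ↦ LinearMap.congr_fun (h i j) x

lemma apply_eq_zero_of_mem_operatorSupport_of_mem_commonKernel
    {ω : W →ₗ[R] W →ₗ[R] N} {T : ι → Module.End R W}
    (hT : ∀ i x y, ω (T i x) y = ω (T i y) x) {u v : W}
    (hu : u ∈ operatorSupport T) (hv : v ∈ commonKernel T) : ω u v = 0 := by
  suffices h : operatorSupport T ≤ LinearMap.ker (ω.flip v) from h hu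
  refine operatorSupport_le_iff.mpr fun i x ↦ ?_
  rw [LinearMap.mem_ker, LinearMap.flip_apply, hT, mem_commonKernel.mp hv i, map_zero,
    LinearMap.zero_apply]

end OperatorFamilies

section SymmetricFunctions

variable {α β : Type*}

lemma swap_first_second_of_symmetric {f : α → α → α → β}
    (hf : ∀ (v : Fin 3 → α) (σ : Equiv.Perm (Fin 3)),
      f (v (σ 0)) (v (σ 1)) (v (σ 2)) = f (v 0) (v 1) (v 2)) (a b c : α) :
    f a b c = f b a c := by
  simpa [Equiv.swap_apply_def] using hf ![b, a, c] (Equiv.swap 0 1)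

lemma swap_second_third_of_symmetric {f : α → α → α → β}
    (hf : ∀ (v : Fin 3 → α) (σ : Equiv.Perm (Fin 3)),
      f (v (σ 0)) (v (σ 1)) (v (σ 2)) = f (v 0) (v 1) (v 2)) (a b c : α) :
    f a b c = f a c b := by
  simpa [Equiv.swap_apply_def] using hf ![a, c, b] (Equiv.swap 1 2)

lemma swap_first_third_of_symmetric {f : α → α → α → α → β}
    (hf : ∀ (v : Fin 4 → α) (σ : Equiv.Perm (Fin 4)),
      f (v (σ 0)) (v (σ 1)) (v (σ 2)) (v (σ 3)) = f (v 0) (v 1) (v 2) (v 3)) (a b c d : α) :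
    f a b c d = f c b a d := by
  simpa [Equiv.swap_apply_def] using hf ![c, b, a, d] (Equiv.swap 0 2)

lemma swap_third_fourth_of_symmetric {f : α → α → α → α → β}
    (hf : ∀ (v : Fin 4 → α) (σ : Equiv.Perm (Fin 4)),
      f (v (σ 0)) (v (σ 1)) (v (σ 2)) (v (σ 3)) = f (v 0) (v 1) (v 2) (v 3)) (a b c d : α) :
    f a b c d = f a b d c := by
  simpa [Equiv.swap_apply_def] using hf ![a, b, d, c] (Equiv.swap 2 3)

end SymmetricFunctions

section SymmetricForms

variable {R W N : Type*} [CommSemiring R] [AddCommMonoid W] [Module R W]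
  [AddCommMonoid N] [Module R N] {ω : W →ₗ[R] W →ₗ[R] N}

lemma cubic_eq_zero_of_mem_commonKernel {C : W → W → W → N}
    (hC : ∀ (v : Fin 3 → W) (σ : Equiv.Perm (Fin 3)),
      C (v (σ 0)) (v (σ 1)) (v (σ 2)) = C (v 0) (v 1) (v 2))
    {T : W → Module.End R W} (hT : ∀ x y z, ω (T x y) z = C x y z)
    {v : W} (hv : v ∈ commonKernel T) (x y : W) : C v x y = 0 := by
  rw [swap_first_second_of_symmetric hC, ← hT, mem_commonKernel.mp hv x, map_zero,
    LinearMap.zero_apply]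

lemma quartic_eq_zero_of_mem_commonKernel {D : W → W → W → W → N}
    (hD : ∀ (v : Fin 4 → W) (σ : Equiv.Perm (Fin 4)),
      D (v (σ 0)) (v (σ 1)) (v (σ 2)) (v (σ 3)) = D (v 0) (v 1) (v 2) (v 3))
    {T : W → W → Module.End R W} (hT : ∀ x y z w, ω (T x y z) w = D x y z w)
    {v : W} (hv : v ∈ commonKernel fun p : W × W ↦ T p.1 p.2) (x y z : W) : D v x y z = 0 := by
  rw [swap_first_third_of_symmetric hD, ← hT, mem_commonKernel.mp hv (y, x), map_zero,
    LinearMap.zero_apply]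

end SymmetricForms

theorem stmt_12_general {R W N : Type*} [CommSemiring R] [AddCommMonoid W] [Module R W]
    [AddCommMonoid N] [Module R N] (ω : W →ₗ[R] W →ₗ[R] N)
    (B : W → W → N)
    (hB_symm : ∀ x y : W, B x y = B y x)
    (C : W → W → W → N)
    (hC_symm : ∀ (v : Fin 3 → W) (σ : Equiv.Perm (Fin 3)),
      C (v (σ 0)) (v (σ 1)) (v (σ 2)) = C (v 0) (v 1) (v 2))
    (D : W → W → W → W → N)
    (hD_symm : ∀ (v : Fin 4 → W) (σ : Equiv.Perm (Fin 4)),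
      D (v (σ 0)) (v (σ 1)) (v (σ 2)) (v (σ 3)) = D (v 0) (v 1) (v 2) (v 3))
    (Bop : W →ₗ[R] W)
    (hBop : ∀ x y : W, ω (Bop x) y = B x y)
    (Cop : W → W →ₗ[R] W)
    (hCop : ∀ x y z : W, ω (Cop x y) z = C x y z)
    (Dop : W → W → W →ₗ[R] W)
    (hDop : ∀ x y z w : W, ω (Dop x y z) w = D x y z w)
    (hBB : Bop ∘ₗ Bop = 0)
    (hBC : ∀ x : W, Bop ∘ₗ (Cop x) = 0)
    (hCB : ∀ x : W, (Cop x) ∘ₗ Bop = 0)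
    (hBD : ∀ x y : W, Bop ∘ₗ (Dop x y) = 0)
    (hDB : ∀ x y : W, (Dop x y) ∘ₗ Bop = 0)
    (hCC : ∀ x y : W, (Cop x) ∘ₗ (Cop y) = 0)
    (hCD : ∀ x y z : W, (Cop x) ∘ₗ (Dop y z) = 0)
    (hDC : ∀ x y z : W, (Dop x y) ∘ₗ (Cop z) = 0) :
    (∀ v ∈ LinearMap.range Bop ⊔ Submodule.span R {v : W | ∃ x y, v = Cop x y},
      Bop v = 0 ∧ (∀ x y : W, C v x y = 0) ∧ (∀ x y z : W, D v x y z = 0)) ∧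
    (∀ v ∈ Submodule.span R {v : W | ∃ x y z, v = Dop x y z},
      Bop v = 0 ∧ (∀ x y : W, C v x y = 0)) ∧
    (∀ u ∈ LinearMap.range Bop ⊔ Submodule.span R {v : W | ∃ x y, v = Cop x y},
      ∀ v ∈ LinearMap.range Bop ⊔ Submodule.span R {v : W | ∃ x y, v = Cop x y},
        ω u v = 0) ∧
    (∀ u ∈ Submodule.span R {v : W | ∃ x y z, v = Dop x y z},
      ∀ v ∈ LinearMap.range Bop ⊔ Submodule.span R {v : W | ∃ x y, v = Cop x y},
        ω u v = 0) := by
  let P : Option W → Module.End R W := Option.elim' Bop Cop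
  let Q : W × W → Module.End R W := fun p ↦ Dop p.1 p.2
  have hP_supp : operatorSupport P =
      LinearMap.range Bop ⊔ Submodule.span R {v : W | ∃ x y, v = Cop x y} :=
    operatorSupport_option_elim' Bop Cop
  have hQ_supp : operatorSupport Q = Submodule.span R {v : W | ∃ x y z, v = Dop x y z} := by
    simp only [operatorSupport, Q, Prod.exists]
  have hP_ker : ∀ v ∈ commonKernel P, Bop v = 0 ∧ ∀ x y, C v x y = 0 := fun v hv ↦
    have ⟨hvB, hvC⟩ := Submodule.mem_inf.mp ((commonKernel_option_elim' Bop Cop).le hv)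
    ⟨hvB, cubic_eq_zero_of_mem_commonKernel hC_symm hCop hvC⟩
  have hP_symm : ∀ i x y, ω (P i x) y = ω (P i y) x := Option.forall.mpr
    ⟨fun x y ↦ (hBop x y).trans <| (hB_symm x y).trans (hBop y x).symm, fun a x y ↦
      (hCop a x y).trans <| (swap_second_third_of_symmetric hC_symm a x y).trans (hCop a y x).symm⟩
  have hQ_symm : ∀ p x y, ω (Q p x) y = ω (Q p y) x := fun p x y ↦ by
    simpa only [← hDop] using swap_third_fourth_of_symmetric hD_symm p.1 p.2 x y
  have hPP : operatorSupport P ≤ commonKernel P := operatorSupport_le_commonKernel <|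
    Option.forall.mpr ⟨Option.forall.mpr ⟨hBB, hBC⟩, fun x ↦ Option.forall.mpr ⟨hCB x, hCC x⟩⟩
  have hPQ : operatorSupport P ≤ commonKernel Q := operatorSupport_le_commonKernel fun p ↦
    Option.forall.mpr ⟨hDB p.1 p.2, hDC p.1 p.2⟩
  have hQP : operatorSupport Q ≤ commonKernel P := operatorSupport_le_commonKernel <|
    Option.forall.mpr ⟨fun p ↦ hBD p.1 p.2, fun x p ↦ hCD x p.1 p.2⟩
  rw [← hP_supp, ← hQ_supp]
  refine ⟨fun v hv ↦ ?_, fun v hv ↦ hP_ker v (hQP hv), fun u hu v hv ↦ ?_, fun u hu v hv ↦ ?_⟩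
  · obtain ⟨hvB, hvC⟩ := hP_ker v (hPP hv)
    exact ⟨hvB, hvC, quartic_eq_zero_of_mem_commonKernel hD_symm hDop (hPQ hv)⟩
  · exact apply_eq_zero_of_mem_operatorSupport_of_mem_commonKernel hP_symm hu (hPP hv)
  · exact apply_eq_zero_of_mem_operatorSupport_of_mem_commonKernel hQ_symm hu (hPQ hv)

/-- If all pairwise compositions of the operators `B̂`, `C_x`, `D_{x,y}` vanish, then the
supports satisfy: `Σ_B + Σ_C ⊆ ker B̂ ∩ ker C ∩ ker D`, `Σ_D ⊆ ker B̂ ∩ ker C`,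
`Σ_B + Σ_C` is `ω`-isotropic, and `ω(Σ_D, Σ_B + Σ_C) = 0`. -/
theorem stmt_12 (W : Type*) [AddCommGroup W] [Module ℂ W] [FiniteDimensional ℂ W]
    (ω : W →ₗ[ℂ] W →ₗ[ℂ] ℂ)
    (hω_alt : ∀ x : W, ω x x = 0)
    (hω_nd : ∀ x : W, (∀ y : W, ω x y = 0) → x = 0)
    (B : W → W → ℂ)
    (hB_lin : ∀ y : W, IsLinearMap ℂ (fun x => B x y))
    (hB_symm : ∀ x y : W, B x y = B y x)
    (C : W → W → W → ℂ)
    (hC_lin : ∀ y z : W, IsLinearMap ℂ (fun x => C x y z))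
    (hC_symm : ∀ (v : Fin 3 → W) (σ : Equiv.Perm (Fin 3)),
      C (v (σ 0)) (v (σ 1)) (v (σ 2)) = C (v 0) (v 1) (v 2))
    (D : W → W → W → W → ℂ)
    (hD_lin : ∀ y z w : W, IsLinearMap ℂ (fun x => D x y z w))
    (hD_symm : ∀ (v : Fin 4 → W) (σ : Equiv.Perm (Fin 4)),
      D (v (σ 0)) (v (σ 1)) (v (σ 2)) (v (σ 3)) = D (v 0) (v 1) (v 2) (v 3))
    (Bop : W →ₗ[ℂ] W)
    (hBop : ∀ x y : W, ω (Bop x) y = B x y)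
    (Cop : W → W →ₗ[ℂ] W)
    (hCop : ∀ x y z : W, ω (Cop x y) z = C x y z)
    (Dop : W → W → W →ₗ[ℂ] W)
    (hDop : ∀ x y z w : W, ω (Dop x y z) w = D x y z w)
    (hBB : Bop ∘ₗ Bop = 0)
    (hBC : ∀ x : W, Bop ∘ₗ (Cop x) = 0)
    (hCB : ∀ x : W, (Cop x) ∘ₗ Bop = 0)
    (hBD : ∀ x y : W, Bop ∘ₗ (Dop x y) = 0)
    (hDB : ∀ x y : W, (Dop x y) ∘ₗ Bop = 0)
    (hCC : ∀ x y : W, (Cop x) ∘ₗ (Cop y) = 0)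
    (hCD : ∀ x y z : W, (Cop x) ∘ₗ (Dop y z) = 0)
    (hDC : ∀ x y z : W, (Dop x y) ∘ₗ (Cop z) = 0) :
    (∀ v ∈ LinearMap.range Bop ⊔ Submodule.span ℂ {v : W | ∃ x y, v = Cop x y},
      Bop v = 0 ∧ (∀ x y : W, C v x y = 0) ∧ (∀ x y z : W, D v x y z = 0)) ∧
    (∀ v ∈ Submodule.span ℂ {v : W | ∃ x y z, v = Dop x y z},
      Bop v = 0 ∧ (∀ x y : W, C v x y = 0)) ∧
    (∀ u ∈ LinearMap.range Bop ⊔ Submodule.span ℂ {v : W | ∃ x y, v = Cop x y},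
      ∀ v ∈ LinearMap.range Bop ⊔ Submodule.span ℂ {v : W | ∃ x y, v = Cop x y},
        ω u v = 0) ∧
    (∀ u ∈ Submodule.span ℂ {v : W | ∃ x y z, v = Dop x y z},
      ∀ v ∈ LinearMap.range Bop ⊔ Submodule.span ℂ {v : W | ∃ x y, v = Cop x y},
        ω u v = 0) :=
  stmt_12_general ω B hB_symm C hC_symm D hD_symm Bop hBop Cop hCop Dop hDop
    hBB hBC hCB hBD hDB hCC hCD hDC
end

section
/- Let j : E → E be an antilinear map with j∘j = −Id. Then for every symmetric quadrilinear form S on E, the ℂ-linear span of {S_{jx,y} − S_{x,jy} : x,y ∈ E} equals the ℂ-linear span of {S_{x,y} : x,y ∈ E}. Explicitly, for all e,e' ∈ E, setting e'' = −je, one has S_{e,e'} = (1/2)·(S_{je'',e'} − S_{e'',je'}) − (i/2)·(S_{je'',i e'} − S_{e'',j(i e')}). -/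
/-!
A linear map `A` can be recovered from its difference with an antilinear map `B`: replacing `y` by
`i y` multiplies `A y` by `i` and `B y` by `-i`, so a combination of the two differences cancels
`B`. For fixed `x`, apply this to `A = S_{jx, ·}` and `B = S_{x, j ·}`; every `e` has the form `jx`,
with `x = -je`.
-/

section Semilinear

variable {R F V : Type*} [Ring R] [AddCommMonoid F] [Module R F] [AddCommGroup V] [Module R V]
  {σ : R →+* R}

theorem sub_smul_linearMap_apply (A : F →ₗ[R] V) (B : F →ₛₗ[σ] V) (c : R) (y : F) :
    (c - σ c) • A y = (A (c • y) - B (c • y)) - σ c • (A y - B y) := by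
  rw [map_smul, map_smulₛₗ, sub_smul, smul_sub]
  abel

theorem span_linearMap_sub_semilinear_comp {α : Type*} (T : α → F →ₗ[R] V) {f : α → α}
    (hf : f.Surjective) (k : F →ₛₗ[σ] F) {c : R} (hc : IsUnit (c - σ c)) :
    Submodule.span R {v : V | ∃ x y, v = T (f x) y - T x (k y)}
      = Submodule.span R {v : V | ∃ x y, v = T x y} := by
  apply le_antisymm <;> rw [Submodule.span_le]
  · rintro _ ⟨x, y, rfl⟩
    exact sub_mem (Submodule.subset_span ⟨_, _, rfl⟩) (Submodule.subset_span ⟨_, _, rfl⟩)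
  · rintro _ ⟨e, y, rfl⟩
    obtain ⟨x, rfl⟩ := hf e
    rw [SetLike.mem_coe, ← Submodule.smul_mem_iff_of_isUnit _ hc,
      sub_smul_linearMap_apply (T (f x)) ((T x).comp k)]
    exact sub_mem (Submodule.subset_span ⟨_, _, rfl⟩)
      (Submodule.smul_mem _ _ (Submodule.subset_span ⟨_, _, rfl⟩))

end Semilinear

theorem linearMap_apply_eq_sub_antilinear {F V : Type*} [AddCommMonoid F] [Module ℂ F]
    [AddCommGroup V] [Module ℂ V] (A : F →ₗ[ℂ] V) (B : F →ₗ⋆[ℂ] V) (y : F) :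
    A y = (1 / 2 : ℂ) • (A y - B y)
      - (Complex.I / 2) • (A (Complex.I • y) - B (Complex.I • y)) := by
  rw [map_smul, map_smulₛₗ, Complex.conj_I]
  match_scalars <;> linear_combination (1 / 2 : ℂ) * Complex.I_mul_I

theorem isLinearMap_of_separatingLeft {R M N P Q K : Type*} [CommRing R]
    [AddCommMonoid M] [Module R M] [AddCommGroup N] [Module R N] [AddCommMonoid P] [Module R P]
    [AddCommMonoid Q] [Module R Q] [AddCommGroup K] [Module R K]
    {ω : N →ₗ[R] P →ₗ[R] K} (hω : ω.SeparatingLeft) {A : M → Q →ₗ[R] N}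
    (hA : ∀ x y, IsLinearMap R fun m => ω (A m x) y) : IsLinearMap R A := by
  have ω_injective : Function.Injective ω :=
    LinearMap.ker_eq_bot.mp (LinearMap.separatingLeft_iff_ker_eq_bot.mp hω)
  refine ⟨fun m n => ?_, fun c m => ?_⟩ <;> ext x <;> apply ω_injective <;> ext y
  · simpa using (hA x y).map_add m n
  · simpa using (hA x y).map_smul c m

theorem apply_swap_of_perm_invariant {α β : Type*} {S : α → α → α → α → β}
    (hS : ∀ (v : Fin 4 → α) (τ : Equiv.Perm (Fin 4)),
      S (v (τ 0)) (v (τ 1)) (v (τ 2)) (v (τ 3)) = S (v 0) (v 1) (v 2) (v 3))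
    (a b c d : α) : S a b c d = S b a c d :=
  hS ![b, a, c, d] (Equiv.swap 0 1)

theorem stmt_16_general {E V : Type*} [AddCommGroup E] [Module ℂ E] [AddCommGroup V] [Module ℂ V]
    (T : E → E →ₗ[ℂ] V) (j : E →ₗ⋆[ℂ] E) (hjj : ∀ x, j (j x) = -x) :
    Submodule.span ℂ {v : V | ∃ x y, v = T (j x) y - T x (j y)}
      = Submodule.span ℂ {v : V | ∃ x y, v = T x y} ∧
    (∀ e e' : E,
      T e e'
        = (1 / 2 : ℂ) • (T (j (-(j e))) e' - T (-(j e)) (j e'))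
          - (Complex.I / 2) • (T (j (-(j e))) (Complex.I • e')
              - T (-(j e)) (j (Complex.I • e')))) := by
  have j_neg_j (e : E) : j (-(j e)) = e := by rw [map_neg, hjj, neg_neg]
  have I_sub_conj_isUnit : IsUnit (Complex.I - starRingEnd ℂ Complex.I) := by
    simp [Complex.conj_I]
  refine ⟨span_linearMap_sub_semilinear_comp T (fun e => ⟨_, j_neg_j e⟩) j I_sub_conj_isUnit,
    fun e e' => ?_⟩
  rw [j_neg_j]
  exact linearMap_apply_eq_sub_antilinear (T e) ((T (-(j e))).comp j) e'

/-- For an antilinear `j` with `j² = −Id`, the span of `{S_{jx,y} − S_{x,jy}}` equals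
the span of `{S_{x,y}}`; explicitly, with `e'' = −je`,
`S_{e,e'} = ½(S_{je'',e'} − S_{e'',je'}) − (i/2)(S_{je'',ie'} − S_{e'',j(ie')})`. -/
theorem stmt_16 (E : Type*) [AddCommGroup E] [Module ℂ E] [FiniteDimensional ℂ E]
    (ω : E →ₗ[ℂ] E →ₗ[ℂ] ℂ)
    (hω_alt : ∀ x : E, ω x x = 0)
    (hω_nd : ∀ x : E, (∀ y : E, ω x y = 0) → x = 0)
    (S : E → E → E → E → ℂ)
    (hS_lin : ∀ y z w : E, IsLinearMap ℂ (fun x => S x y z w))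
    (hS_symm : ∀ (v : Fin 4 → E) (σ : Equiv.Perm (Fin 4)),
      S (v (σ 0)) (v (σ 1)) (v (σ 2)) (v (σ 3)) = S (v 0) (v 1) (v 2) (v 3))
    (Sop : E → E → E →ₗ[ℂ] E)
    (hSop : ∀ e e' x y : E, ω (Sop e e' x) y = S e e' x y)
    (j : E → E)
    (hj_add : ∀ x y : E, j (x + y) = j x + j y)
    (hj_smul : ∀ (c : ℂ) (x : E), j (c • x) = (starRingEnd ℂ c) • j x)
    (hjj : ∀ x : E, j (j x) = -x) :
    Submodule.span ℂ {A : E →ₗ[ℂ] E | ∃ x y, A = Sop (j x) y - Sop x (j y)}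
      = Submodule.span ℂ {A : E →ₗ[ℂ] E | ∃ x y, A = Sop x y} ∧
    (∀ e e' : E,
      Sop e e'
        = (1 / 2 : ℂ) • (Sop (j (-(j e))) e' - Sop (-(j e)) (j e'))
          - (Complex.I / 2) • (Sop (j (-(j e))) (Complex.I • e')
              - Sop (-(j e)) (j (Complex.I • e')))) := by
  have Sop_linear (e : E) : IsLinearMap ℂ (Sop e) :=
    isLinearMap_of_separatingLeft hω_nd fun x y => by
      simpa only [hSop, apply_swap_of_perm_invariant hS_symm e] using hS_lin e x y
  exact stmt_16_general (fun e => (Sop_linear e).mk' _) ⟨⟨j, hj_add⟩, hj_smul⟩ hjj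
end
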